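/- There exists b > 0 such that the following holds. For every η' < η and every probability density ρ on 𝕊 that is Lipschitz on J_z with constant L > 0 for some z ∈ 𝕊, writing ρ_{n,k} = ℒ_{T_{n,k}} ⋯ ℒ_{T_{n,1}} ρ and ρ̂_t for the density of the SRB measure μ̂_{γ_t}, one has ‖ρ_{n,⌊nt⌋} − ρ̂_t‖_{L¹(𝔪)} ≤ C n^{−η'}, and more generally ‖ρ_{n,⌊nt⌋} − ρ̂_s‖_{L¹(𝔪)} ≤ C(n^{−η'} + |t−s|^{η'}), whenever t ≥ b n^{−1} log n; the constant C > 0 depends only on η' and L. -/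

import Mathlib

open MeasureTheory Filter Topology Set UniformConvergence

noncomputable section

instance : Fact ((0:ℝ) < 1) := ⟨zero_lt_one⟩

/-- The circle `𝕊 = ℝ/ℤ`. -/
abbrev Circle1 : Type := AddCircle (1 : ℝ)

/-- A `C²` expanding circle map with expansion `≥ lam` and `‖T''‖_∞ ≤ Astar`,
encoded by a lift `F : ℝ → ℝ` satisfying `F (x+1) = F x + deg`. -/
structure CM (lam Astar : ℝ) where
  F : ℝ → ℝ
  deg : ℤ
  lift_add_one : ∀ x : ℝ, F (x + 1) = F x + deg
  contDiff : ContDiff ℝ 2 F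
  expanding : ∀ x : ℝ, lam ≤ deriv F x
  second_bound : ∀ x : ℝ, |deriv (deriv F) x| ≤ Astar

namespace CM

variable {lam Astar : ℝ}

/-- The induced map on the circle. -/
def toMap (T : CM lam Astar) : Circle1 → Circle1 :=
  fun x => (↑(T.F ((AddCircle.equivIco 1 0 x : ℝ))) : Circle1)

/-- The derivative of `T`, as a function on the circle. -/
def dmap (T : CM lam Astar) : Circle1 → ℝ :=
  fun x => deriv T.F ((AddCircle.equivIco 1 0 x : ℝ))

end CM

/-- The `C¹` distance on the space of maps. -/
def dC1 {lam Astar : ℝ} (T₁ T₂ : CM lam Astar) : ℝ :=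
  (⨆ x : Circle1, dist (T₁.toMap x) (T₂.toMap x)) + (⨆ x : Circle1, |T₁.dmap x - T₂.dmap x|)

/-- The transfer operator `ℒ_T h (x) = ∑_{T y = x} h y / T' y`. -/
def transfer {lam Astar : ℝ} (T : CM lam Astar) (h : Circle1 → ℝ) : Circle1 → ℝ :=
  fun x => ∑' y : {y : Circle1 // T.toMap y = x}, h y / T.dmap y

/-- Iterated transfer operators `ℒ_k ⋯ ℒ_1` of the sequence `T_1, T_2, …` (`Ts i = T_i`). -/
def transferIter {lam Astar : ℝ} (Ts : ℕ → CM lam Astar) : ℕ → (Circle1 → ℝ) → (Circle1 → ℝ)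
  | 0, h => h
  | (k+1), h => transfer (Ts (k+1)) (transferIter Ts k h)

/-- Composition `T_k ∘ ⋯ ∘ T_1` as circle maps. -/
def mapIter {lam Astar : ℝ} (Ts : ℕ → CM lam Astar) : ℕ → Circle1 → Circle1
  | 0 => id
  | (k+1) => (Ts (k+1)).toMap ∘ mapIter Ts k

/-- Composition of the lifts `F_k ∘ ⋯ ∘ F_1`. -/
def liftIter {lam Astar : ℝ} (Ts : ℕ → CM lam Astar) : ℕ → ℝ → ℝ
  | 0 => id
  | (k+1) => (Ts (k+1)).F ∘ liftIter Ts k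

/-- A real representative of `z`. -/
def zrep (z : Circle1) : ℝ := (AddCircle.equivIco 1 0 z : ℝ)

/-- The coordinate on the cut circle `J_z = 𝕊 ∖ {z}`. -/
def arcCoord (z x : Circle1) : ℝ := ((AddCircle.equivIoc 1 (zrep z) x : ℝ))

/-- `|x − y|_z`: the length of the subarc of `J_z` connecting `x` and `y`. -/
def arcDist (z x y : Circle1) : ℝ := |arcCoord z x - arcCoord z y|

/-- `g` is Lipschitz on `J_z = 𝕊 ∖ {z}` with constant `L`. -/
def LipOnArc (z : Circle1) (L : ℝ) (g : Circle1 → ℝ) : Prop :=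
  ∀ x y : Circle1, x ≠ z → y ≠ z → |g x - g y| ≤ L * arcDist z x y

/-- A probability density w.r.t. the Haar–Lebesgue measure `𝔪` on the circle. -/
def IsProbDensity (ψ : Circle1 → ℝ) : Prop :=
  Integrable ψ volume ∧ (∫ x : Circle1, ψ x) = 1 ∧ ∀ x, 0 ≤ ψ x

/-- The class `𝒟_L`: positive probability densities whose logarithm is Lipschitz
with constant `L` on `J_z` for some `z`. -/
def memD (L : ℝ) (ψ : Circle1 → ℝ) : Prop :=
  IsProbDensity ψ ∧ (∀ x, 0 < ψ x) ∧ ∃ z : Circle1, LipOnArc z L (fun x => Real.log (ψ x))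

/-- The `L¹(𝔪)` norm. -/
def l1norm (h : Circle1 → ℝ) : ℝ := ∫ x : Circle1, |h x|

/-- The supremum norm. -/
def supNorm (h : Circle1 → ℝ) : ℝ := ⨆ x : Circle1, |h x|

/-- The Lipschitz constant of `h` (w.r.t. the metric of the circle). -/
def lipConst (h : Circle1 → ℝ) : ℝ :=
  sInf {L : ℝ | 0 ≤ L ∧ ∀ x y : Circle1, |h x - h y| ≤ L * dist x y}

/-- The Lipschitz norm `‖h‖_Lip = Lip(h) + ‖h‖_∞`. -/
def lipNorm (h : Circle1 → ℝ) : ℝ := lipConst h + supNorm h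

/-- `ρ` is the density of the SRB measure of `T`: the density of a `T`-invariant
probability measure equivalent to `𝔪`. -/
def IsSRBDensity {lam Astar : ℝ} (T : CM lam Astar) (ρ : Circle1 → ℝ) : Prop :=
  IsProbDensity ρ ∧ (∀ᵐ x : Circle1, 0 < ρ x) ∧
    Measure.map T.toMap (volume.withDensity (fun x => ENNReal.ofReal (ρ x))) =
      volume.withDensity (fun x => ENNReal.ofReal (ρ x))

section QDS

variable {lam Astar : ℝ}

/-- `x_{n,k} = T_{n,k} ∘ ⋯ ∘ T_{n,1}` for a triangular array. -/
def arrIter (Tarr : ℕ → ℕ → CM lam Astar) (n : ℕ) : ℕ → Circle1 → Circle1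
  | 0 => id
  | (k+1) => (Tarr n (k+1)).toMap ∘ arrIter Tarr n k

/-- `ℒ_{n,k} ⋯ ℒ_{n,1}` for a triangular array. -/
def arrTransfer (Tarr : ℕ → ℕ → CM lam Astar) (n : ℕ) : ℕ → (Circle1 → ℝ) → (Circle1 → ℝ)
  | 0, h => h
  | (k+1), h => transfer (Tarr n (k+1)) (arrTransfer Tarr n k h)

/-- `f_{n,k} = f ∘ T_{n,k} ∘ ⋯ ∘ T_{n,1}` evaluated at `x`. -/
def fnk (Tarr : ℕ → ℕ → CM lam Astar) (f : Circle1 → ℝ) (n k : ℕ) (x : Circle1) : ℝ :=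
  f (arrIter Tarr n k x)

/-- `ζₙ(x,t) = n⁻¹ (∑_{k<⌊nt⌋} f_{n,k}(x) + {nt}·f_{n,⌊nt⌋}(x))`. -/
def zetaP (Tarr : ℕ → ℕ → CM lam Astar) (f : Circle1 → ℝ) (n : ℕ) (x : Circle1) (t : ℝ) : ℝ :=
  (n : ℝ)⁻¹ * ((∑ k ∈ Finset.range ⌊(n : ℝ) * t⌋₊, fnk Tarr f n k x) +
    Int.fract ((n : ℝ) * t) * fnk Tarr f n ⌊(n : ℝ) * t⌋₊ x)

/-- `ξₙ(x,t) = √n ζₙ(x,t) − √n μ(ζₙ(·,t))` for a measure `μ`. -/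
def xiP (Tarr : ℕ → ℕ → CM lam Astar) (f : Circle1 → ℝ) (μ : Measure Circle1) (n : ℕ)
    (x : Circle1) (t : ℝ) : ℝ :=
  Real.sqrt n * zetaP Tarr f n x t - Real.sqrt n * ∫ y, zetaP Tarr f n y t ∂μ

/-- The Hölder continuity (exponent `η`) of the curve `γ` on `[0,1]`, w.r.t. `d_{C¹}`. -/
def HolderCurve (η : ℝ) (γ : ℝ → CM lam Astar) : Prop :=
  ∃ H : ℝ, ∀ s ∈ Icc (0:ℝ) 1, ∀ t ∈ Icc (0:ℝ) 1, dC1 (γ s) (γ t) ≤ H * |s - t| ^ η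

/-- The convergence-rate condition `sup_n n^η sup_t d_{C¹}(T_{n,⌊nt⌋}, γ_t) < ∞`. -/
def ArrayApprox (η : ℝ) (γ : ℝ → CM lam Astar) (Tarr : ℕ → ℕ → CM lam Astar) : Prop :=
  ∃ M : ℝ, ∀ n : ℕ, 1 ≤ n → ∀ t ∈ Icc (0:ℝ) 1,
    (n : ℝ) ^ η * dC1 (Tarr n ⌊(n : ℝ) * t⌋₊) (γ t) ≤ M

end QDS

/-- The path space: functions `[0,1] → ℝ` with the topology of uniform convergence;
continuous paths (with the supremum metric) embed isometrically. -/
abbrev PathSpace : Type := (Icc (0:ℝ) 1) →ᵤ ℝ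

instance : MeasurableSpace PathSpace := borel PathSpace

/-- A function `[0,1] → ℝ` (given as a function on `ℝ`) as a point of the path space. -/
def pathOf (g : ℝ → ℝ) : PathSpace := UniformFun.ofFun (fun t => g t)

/-- Evaluation of a path at time `t` (clamped to `[0,1]`). -/
def evalPath (t : ℝ) (ω : PathSpace) : ℝ := UniformFun.toFun ω (projIcc 0 1 zero_le_one t)


section Extra

variable {lam Astar : ℝ}

/-- `μ(ζₙ(·,t))` for the measure with density `ρ` w.r.t. `𝔪`. -/
def zetaMean (Tarr : ℕ → ℕ → CM lam Astar) (f : Circle1 → ℝ) (ρ : Circle1 → ℝ)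
    (n : ℕ) (t : ℝ) : ℝ :=
  ∫ y : Circle1, zetaP Tarr f n y t * ρ y

/-- `𝔪(ζₙ(·,t))`, the mean w.r.t. the Lebesgue measure. -/
def zetaMeanM (Tarr : ℕ → ℕ → CM lam Astar) (f : Circle1 → ℝ) (n : ℕ) (t : ℝ) : ℝ :=
  ∫ y : Circle1, zetaP Tarr f n y t

/-- `ξₙ(x,t) = √n ζₙ(x,t) − √n μ(ζₙ(·,t))`, where `μ` has density `ρ`. -/
def xiD (Tarr : ℕ → ℕ → CM lam Astar) (f : Circle1 → ℝ) (ρ : Circle1 → ℝ)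
    (n : ℕ) (x : Circle1) (t : ℝ) : ℝ :=
  Real.sqrt n * zetaP Tarr f n x t - Real.sqrt n * zetaMean Tarr f ρ n t

end Extra

/-- The σ-algebra `𝔉_t` on the path space, generated by the evaluations at times `s ∈ [0,t]`. -/
def pathFiltration (t : ℝ) : MeasurableSpace PathSpace :=
  ⨆ (s : ℝ) (_ : 0 ≤ s ∧ s ≤ t), MeasurableSpace.comap (evalPath s) (borel ℝ)

/-- The process `M_t(ω) = A(ω(t)) − A(ω(0)) − ½∫₀ᵗ σ̂ₛ²·A''(ω(s)) ds`. -/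
def MGproc (σ2 : ℝ → ℝ) (A : ℝ → ℝ) (t : ℝ) (ω : PathSpace) : ℝ :=
  A (evalPath t ω) - A (evalPath 0 ω) -
    (1/2) * ∫ s in (0:ℝ)..t, σ2 s * deriv (deriv A) (evalPath s ω)

/-- `P` solves the martingale problem on `C⁰([0,1],ℝ)` for the generator `½σ̂ₜ² d²/dx²`,
started at `0`:  `P` is a probability measure, concentrated on continuous paths starting at `0`,
and for every `A ∈ C_c^∞(ℝ)` the process `MGproc σ2 A` is a `P`-martingale w.r.t. the
natural filtration `𝔉_t`.  -/
def SolvesMartingaleProblem (σ2 : ℝ → ℝ) (P : Measure PathSpace) : Prop :=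
  IsProbabilityMeasure P ∧
  P {ω : PathSpace | evalPath 0 ω = 0} = 1 ∧
  P {ω : PathSpace | Continuous (UniformFun.toFun ω)} = 1 ∧
  ∀ A : ℝ → ℝ, ContDiff ℝ (⊤ : ℕ∞) A → HasCompactSupport A →
    (∀ t ∈ Icc (0:ℝ) 1, Integrable (MGproc σ2 A t) P) ∧
    (∀ t ∈ Icc (0:ℝ) 1, @Measurable PathSpace ℝ (pathFiltration t) _ (MGproc σ2 A t)) ∧
    (∀ s ∈ Icc (0:ℝ) 1, ∀ t ∈ Icc (0:ℝ) 1, s ≤ t →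
      P[MGproc σ2 A t | pathFiltration s] =ᵐ[P] MGproc σ2 A s)

end

/-!
Call a nonnegative function `a`-log-Lipschitz if its logarithm is `a`-Lipschitz. For `a` large,
every transfer operator of the class maps the cone of these functions into a strictly smaller
cone, so after one step two functions of the cone with the same integral have a fixed proportion
of a constant function in common, and subtracting it leaves them in the cone. Iterating, their
`L¹`-distance after `k` steps is `O(θ ^ k)`, whichever maps are applied.

A density which is `L`-Lipschitz on `J_z` is `ε`-close in `L¹` to a function with Lipschitz constant
`O(1 / ε)`, so after `k` steps it differs from the evolution of the constant density `1` by
`O(ε + θ ^ k / ε)`. This is `O(n ^ (-η))` for `ε = n ^ (-η)` and `k ≥ b log n`.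

Let `e = max n⁻¹ |t - s|`. Replacing each of the last `m` maps applied to `1` by `γ s` costs
`O(((m + 1) e) ^ η)` in `L¹`, since the functions of the cone vary little between the preimages of a
point under two nearby maps; and `m` steps of `γ s` bring a density of the cone `O(θ ^ m)`-close to
the invariant one. Taking `m ≈ η log (1 / e) / |log θ|` gives the total error
`O((1 + log (1 / e)) ^ (1 + η) e ^ η)`.
-/

/-! ### Expanding maps and their inverse branches -/

namespace QDS

theorem coe_eq_coe_iff_exists_int {x y : ℝ} :
    (x : Circle1) = (y : Circle1) ↔ ∃ n : ℤ, x = y + n := by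
  rw [← sub_eq_zero, ← AddCircle.coe_sub, AddCircle.coe_eq_zero_iff]
  simp only [zsmul_eq_mul, mul_one, eq_sub_iff_add_eq', eq_comm (a := x)]

theorem coe_add_int (x : ℝ) (n : ℤ) : ((x + n : ℝ) : Circle1) = (x : Circle1) :=
  coe_eq_coe_iff_exists_int.2 ⟨n, rfl⟩

end QDS

namespace CM

variable {lam Astar : ℝ}

theorem differentiable_lift (T : CM lam Astar) : Differentiable ℝ T.F :=
  T.contDiff.differentiable two_ne_zero

theorem differentiable_deriv_lift (T : CM lam Astar) : Differentiable ℝ (deriv T.F) :=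
  (contDiff_succ_iff_deriv.1 (one_add_one_eq_two (R := WithTop ℕ∞) ▸ T.contDiff)).2.2.differentiable
    one_ne_zero

theorem secondBound_nonneg (T : CM lam Astar) : 0 ≤ Astar :=
  (abs_nonneg _).trans (T.second_bound 0)

theorem mul_sub_le_lift_sub (T : CM lam Astar) {x y : ℝ} (h : x ≤ y) :
    lam * (y - x) ≤ T.F y - T.F x :=
  mul_sub_le_image_sub_of_le_deriv T.differentiable_lift T.expanding h

theorem mul_abs_sub_le_abs_lift_sub (T : CM lam Astar) (x y : ℝ) :
    lam * |x - y| ≤ |T.F x - T.F y| := by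
  wlog h : y ≤ x generalizing x y
  · simpa only [abs_sub_comm] using this y x (le_of_not_ge h)
  · rw [abs_of_nonneg (sub_nonneg.2 h)]
    exact (T.mul_sub_le_lift_sub h).trans (le_abs_self _)

theorem abs_deriv_lift_sub_le (T : CM lam Astar) (x y : ℝ) :
    |deriv T.F x - deriv T.F y| ≤ Astar * |x - y| :=
  convex_univ.norm_image_sub_le_of_norm_deriv_le (fun z _ => T.differentiable_deriv_lift z)
    (fun z _ => T.second_bound z) (mem_univ y) (mem_univ x)

theorem lift_add_int (T : CM lam Astar) (x : ℝ) (n : ℤ) : T.F (x + n) = T.F x + n * T.deg := by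
  induction n with
  | zero => simp
  | succ k ih =>
    have h := T.lift_add_one (x + k)
    rw [add_assoc] at h
    push_cast at ih ⊢
    linarith
  | pred k ih =>
    have h := T.lift_add_one (x + (-k - 1))
    rw [show x + (-(k : ℝ) - 1) + 1 = x + -k by ring] at h
    push_cast at ih ⊢
    linarith

theorem periodic_deriv_lift (T : CM lam Astar) : Function.Periodic (deriv T.F) 1 := fun x => by
  rw [← deriv_comp_add_const, funext T.lift_add_one, deriv_add_const]

theorem deriv_lift_pos (hlam : 0 < lam) (T : CM lam Astar) (x : ℝ) : 0 < deriv T.F x :=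
  hlam.trans_le (T.expanding x)

theorem strictMono_lift (hlam : 0 < lam) (T : CM lam Astar) : StrictMono T.F :=
  strictMono_of_deriv_pos (T.deriv_lift_pos hlam)

theorem deg_pos (hlam : 0 < lam) (T : CM lam Astar) : 0 < T.deg := by
  have h := T.strictMono_lift hlam (lt_add_one 0)
  rw [T.lift_add_one] at h
  exact_mod_cast (lt_add_iff_pos_right _).1 h

theorem surjective_lift (hlam : 0 < lam) (T : CM lam Astar) : Function.Surjective T.F := by
  have hbot : Tendsto (fun x : ℝ => T.F 0 + lam * x) atBot atBot :=
    tendsto_atBot_add_const_left _ _ (tendsto_id.const_mul_atBot hlam)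
  have htop : Tendsto (fun x : ℝ => T.F 0 + lam * x) atTop atTop :=
    tendsto_atTop_add_const_left _ _ (tendsto_id.const_mul_atTop hlam)
  refine T.differentiable_lift.continuous.surjective (tendsto_atTop_mono' _ ?_ htop)
    (tendsto_atBot_mono' _ ?_ hbot)
  · filter_upwards [eventually_ge_atTop 0] with x hx
    linarith [T.mul_sub_le_lift_sub hx]
  · filter_upwards [eventually_le_atBot 0] with x hx
    linarith [T.mul_sub_le_lift_sub hx]

/-- The lift of `T` as an order isomorphism of `ℝ`; its inverse carries the inverse branches of
`T`, the preimages of `↑x` under `T` being the classes of `(T.liftIso hlam).symm (x + j)`. -/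
noncomputable def liftIso (hlam : 0 < lam) (T : CM lam Astar) : ℝ ≃o ℝ :=
  (T.strictMono_lift hlam).orderIsoOfSurjective T.F (T.surjective_lift hlam)

theorem lift_symm (hlam : 0 < lam) (T : CM lam Astar) (x : ℝ) :
    T.F ((T.liftIso hlam).symm x) = x :=
  (T.liftIso hlam).apply_symm_apply x

theorem symm_lift (hlam : 0 < lam) (T : CM lam Astar) (x : ℝ) :
    (T.liftIso hlam).symm (T.F x) = x :=
  (T.liftIso hlam).symm_apply_apply x

theorem symm_add_deg (hlam : 0 < lam) (T : CM lam Astar) (x : ℝ) :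
    (T.liftIso hlam).symm (x + T.deg) = (T.liftIso hlam).symm x + 1 := by
  rw [OrderIso.symm_apply_eq]
  exact (by rw [T.lift_add_one, lift_symm] : T.F _ = _).symm

theorem mul_abs_symm_sub_le (hlam : 0 < lam) (T : CM lam Astar) (x y : ℝ) :
    lam * |(T.liftIso hlam).symm x - (T.liftIso hlam).symm y| ≤ |x - y| := by
  simpa only [lift_symm] using
    T.mul_abs_sub_le_abs_lift_sub ((T.liftIso hlam).symm x) ((T.liftIso hlam).symm y)

theorem natCast_toNat_deg (hlam : 0 < lam) (T : CM lam Astar) : (T.deg.toNat : ℝ) = T.deg := by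
  exact_mod_cast Int.toNat_of_nonneg (T.deg_pos hlam).le

theorem toMap_coe (T : CM lam Astar) (x : ℝ) : T.toMap (x : Circle1) = (T.F x : Circle1) := by
  have h := T.lift_add_int (Int.fract x) ⌊x⌋
  rw [Int.fract_add_floor] at h
  rw [toMap, AddCircle.coe_equivIco_mk_apply, div_one, mul_one, h, ← Int.cast_mul,
    QDS.coe_add_int]

theorem dmap_coe (T : CM lam Astar) (x : ℝ) : T.dmap (x : Circle1) = deriv T.F x := by
  have h := T.periodic_deriv_lift.int_mul ⌊x⌋ (Int.fract x)
  rw [mul_one, Int.fract_add_floor] at h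
  rw [dmap, AddCircle.coe_equivIco_mk_apply, div_one, mul_one, h]

theorem dmap_pos (hlam : 0 < lam) (T : CM lam Astar) (x : Circle1) : 0 < T.dmap x :=
  T.deriv_lift_pos hlam _

theorem measurable_toMap (T : CM lam Astar) : Measurable T.toMap :=
  AddCircle.measurable_mk'.comp <| T.differentiable_lift.continuous.measurable.comp <|
    measurable_subtype_coe.comp (AddCircle.measurableEquivIco 1 0).measurable

end CM

namespace QDS

theorem integrable_of_integrableOn_coe {f : Circle1 → ℝ} {a : ℝ}
    (hf : IntegrableOn (fun x : ℝ => f x) (Ioc a (a + 1))) : Integrable f := by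
  have hsub : Integrable (fun x : Ioc a (a + 1) => f (x : ℝ)) (Measure.comap Subtype.val volume) :=
    (measurePreserving_subtype_coe measurableSet_Ioc).integrable_comp_of_integrable hf
  refine (((AddCircle.measurePreserving_equivIoc 1 (a := a)).integrable_comp_emb
    (AddCircle.measurableEquivIoc 1 a).measurableEmbedding).2 hsub).congr (.of_forall fun x => ?_)
  exact congrArg f AddCircle.coe_equivIoc

theorem intervalIntegrable_translate {f : ℝ → ℝ} {a : ℝ} {d j : ℕ} (hj : j < d)
    (hf : IntervalIntegrable f volume a (a + d)) :
    IntervalIntegrable (fun x => f (x + j)) volume a (a + 1) := by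
  have hjd : (j : ℝ) + 1 ≤ d := by exact_mod_cast hj
  have hsub : IntervalIntegrable f volume (a + j) (a + 1 + j) := by
    refine hf.mono_set (uIcc_subset_uIcc ?_ ?_) <;> rw [uIcc_of_le (by linarith)] <;>
      constructor <;> linarith [j.cast_nonneg (α := ℝ)]
  simpa using hsub.comp_add_right (j : ℝ)

theorem sum_intervalIntegral_translate {f : ℝ → ℝ} {a : ℝ} {d : ℕ}
    (hf : IntervalIntegrable f volume a (a + d)) :
    ∑ j ∈ Finset.range d, ∫ x in a..a + 1, f (x + j) = ∫ x in a..a + d, f x := by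
  have hadj := intervalIntegral.sum_integral_adjacent_intervals (μ := volume) (f := f)
    (a := fun k : ℕ => a + k) (n := d) fun j hj => by
      simpa [add_assoc, add_comm (1 : ℝ)] using
        (intervalIntegrable_translate hj hf).comp_add_right (-(j : ℝ))
  simpa [intervalIntegral.integral_comp_add_right, add_assoc, add_comm (1 : ℝ)] using hadj

end QDS

namespace CM

variable {lam Astar : ℝ}

theorem toMap_symm_add (hlam : 0 < lam) (T : CM lam Astar) (x : ℝ) (n : ℕ) :
    T.toMap ((T.liftIso hlam).symm (x + n) : ℝ) = (x : Circle1) := by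
  rw [toMap_coe, lift_symm]
  exact_mod_cast QDS.coe_add_int x n

/-- The map sending `j` to the preimage of `x` under `T` on the `j`-th inverse branch. -/
noncomputable def preimageOfFin (hlam : 0 < lam) (T : CM lam Astar) (x : ℝ)
    (j : Fin T.deg.toNat) : {y : Circle1 // T.toMap y = x} :=
  ⟨((T.liftIso hlam).symm (x + j) : ℝ), T.toMap_symm_add hlam x j⟩

theorem symm_add_mem_Ico (hlam : 0 < lam) (T : CM lam Astar) (x : ℝ) (j : Fin T.deg.toNat) :
    (T.liftIso hlam).symm (x + j) ∈
      Ico ((T.liftIso hlam).symm x) ((T.liftIso hlam).symm x + 1) := by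
  have hj : ((j : ℕ) : ℝ) < T.deg := by
    simpa only [T.natCast_toNat_deg hlam] using (Nat.cast_lt (α := ℝ)).2 j.2
  rw [← T.symm_add_deg hlam]
  exact ⟨(T.liftIso hlam).symm.monotone (by linarith [(j : ℕ).cast_nonneg (α := ℝ)]),
    (T.liftIso hlam).symm.strictMono (by linarith)⟩

theorem bijective_preimageOfFin (hlam : 0 < lam) (T : CM lam Astar) (x : ℝ) :
    Function.Bijective (T.preimageOfFin hlam x) := by
  refine ⟨fun i j hij => ?_, ?_⟩
  · have h := (AddCircle.coe_eq_coe_iff_of_mem_Ico (T.symm_add_mem_Ico hlam x i)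
      (T.symm_add_mem_Ico hlam x j)).1 (Subtype.ext_iff.1 hij)
    exact Fin.ext (by simpa using h)
  · rintro ⟨y, hy⟩
    set y₀ := AddCircle.equivIco 1 ((T.liftIso hlam).symm x) y
    have hcoe : ((y₀ : ℝ) : Circle1) = y := AddCircle.coe_equivIco
    obtain ⟨n, hn⟩ : ∃ n : ℤ, T.F y₀ = x + n :=
      QDS.coe_eq_coe_iff_exists_int.1 (by rw [← toMap_coe, hcoe, hy])
    have hlow : x ≤ x + n := by
      rw [← hn]
      exact (T.liftIso hlam).symm_apply_le.1 y₀.2.1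
    have hupp : x + n < x + T.deg := by
      rw [← hn]
      exact (T.liftIso hlam).lt_symm_apply.1 (by rw [symm_add_deg]; exact y₀.2.2)
    have hn0 : 0 ≤ n := by exact_mod_cast (le_add_iff_nonneg_right x).1 hlow
    have hnd : n < T.deg := by exact_mod_cast (add_lt_add_iff_left x).1 hupp
    refine ⟨⟨n.toNat, by omega⟩, Subtype.ext ?_⟩
    have hcast : ((n.toNat : ℕ) : ℝ) = n := by exact_mod_cast Int.toNat_of_nonneg hn0
    simp only [preimageOfFin, hcast, ← hn, symm_lift, hcoe]

/-- The contribution to the transfer operator of the preimage `y` of `x`, as a function of the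
point `x` on the real line. -/
noncomputable def branchWeight (hlam : 0 < lam) (T : CM lam Astar) (h : Circle1 → ℝ) (x : ℝ) : ℝ :=
  h ((T.liftIso hlam).symm x : ℝ) / deriv T.F ((T.liftIso hlam).symm x)

theorem transfer_coe (hlam : 0 < lam) (T : CM lam Astar) (h : Circle1 → ℝ) (x : ℝ) :
    transfer T h (x : Circle1) =
      ∑ j ∈ Finset.range T.deg.toNat, T.branchWeight hlam h (x + j) := by
  rw [transfer, ← (Equiv.ofBijective _ (T.bijective_preimageOfFin hlam x)).tsum_eq, tsum_fintype,
    Finset.sum_range]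
  simp only [Equiv.ofBijective_apply, preimageOfFin, dmap_coe, branchWeight]

theorem finite_preimage (hlam : 0 < lam) (T : CM lam Astar) (x : Circle1) :
    Finite {y : Circle1 // T.toMap y = x} := by
  induction x using QuotientAddGroup.induction_on with
  | H x => exact Finite.of_surjective _ (T.bijective_preimageOfFin hlam x).surjective

theorem deriv_mul_branchWeight_lift (hlam : 0 < lam) (T : CM lam Astar) (h : Circle1 → ℝ) (x : ℝ) :
    deriv T.F x * T.branchWeight hlam h (T.F x) = h x := by
  rw [branchWeight, symm_lift, mul_div_cancel₀ _ (T.deriv_lift_pos hlam x).ne']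

theorem lift_image_Ioc (hlam : 0 < lam) (T : CM lam Astar) :
    T.F '' Ioc 0 1 = Ioc (T.F 0) (T.F 0 + T.deg) := by
  rw [← T.lift_add_one, zero_add]
  exact (T.liftIso hlam).image_Ioc 0 1

theorem integrableOn_branchWeight (hlam : 0 < lam) (T : CM lam Astar) {h : Circle1 → ℝ}
    (hh : Integrable h) :
    IntegrableOn (T.branchWeight hlam h) (Ioc (T.F 0) (T.F 0 + T.deg)) := by
  rw [← T.lift_image_Ioc hlam, integrableOn_image_iff_integrableOn_deriv_smul_of_monotoneOn
    measurableSet_Ioc (fun x _ => (T.differentiable_lift x).hasDerivAt.hasDerivWithinAt)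
    ((T.strictMono_lift hlam).monotone.monotoneOn _)]
  simp only [smul_eq_mul, deriv_mul_branchWeight_lift]
  have hcoe := (AddCircle.measurePreserving_mk 1 0).integrable_comp_of_integrable hh
  rwa [zero_add] at hcoe

theorem setIntegral_branchWeight (hlam : 0 < lam) (T : CM lam Astar) (h : Circle1 → ℝ) :
    ∫ x in Ioc (T.F 0) (T.F 0 + T.deg), T.branchWeight hlam h x = ∫ x, h x := by
  rw [← T.lift_image_Ioc hlam, integral_image_eq_integral_deriv_smul_of_monotoneOn
    measurableSet_Ioc (fun x _ => (T.differentiable_lift x).hasDerivAt.hasDerivWithinAt)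
    ((T.strictMono_lift hlam).monotone.monotoneOn _)]
  simp only [smul_eq_mul, deriv_mul_branchWeight_lift]
  simpa using AddCircle.integral_preimage 1 0 h

theorem intervalIntegrable_branchWeight (hlam : 0 < lam) (T : CM lam Astar) {h : Circle1 → ℝ}
    (hh : Integrable h) :
    IntervalIntegrable (T.branchWeight hlam h) volume (T.F 0) (T.F 0 + T.deg.toNat) := by
  rw [intervalIntegrable_iff_integrableOn_Ioc_of_le (by simp), T.natCast_toNat_deg hlam]
  exact T.integrableOn_branchWeight hlam hh

end CM

namespace QDS

variable {lam Astar : ℝ}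

/-! ### Transfer operators -/

theorem integrable_transfer (hlam : 0 < lam) (T : CM lam Astar) {h : Circle1 → ℝ}
    (hh : Integrable h) : Integrable (transfer T h) := by
  refine integrable_of_integrableOn_coe (a := T.F 0) ?_
  simp only [T.transfer_coe hlam]
  refine integrable_finsetSum _ fun j hj => ?_
  exact (intervalIntegrable_iff_integrableOn_Ioc_of_le (by simp)).1
    (intervalIntegrable_translate (Finset.mem_range.1 hj)
      (T.intervalIntegrable_branchWeight hlam hh))

theorem integral_transfer (hlam : 0 < lam) (T : CM lam Astar) {h : Circle1 → ℝ}
    (hh : Integrable h) :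
    ∫ x, transfer T h x = ∫ x, h x := by
  have hW := T.intervalIntegrable_branchWeight hlam hh
  rw [← AddCircle.intervalIntegral_preimage 1 (T.F 0)]
  simp only [T.transfer_coe hlam]
  rw [intervalIntegral.integral_finsetSum fun j hj =>
      intervalIntegrable_translate (Finset.mem_range.1 hj) hW,
    sum_intervalIntegral_translate hW, T.natCast_toNat_deg hlam,
    intervalIntegral.integral_of_le (by simpa using (T.deg_pos hlam).le),
    T.setIntegral_branchWeight hlam]

theorem transfer_sub (hlam : 0 < lam) (T : CM lam Astar) (h g : Circle1 → ℝ) :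
    transfer T (h - g) = transfer T h - transfer T g := by
  funext x
  have := T.finite_preimage hlam x
  simp only [transfer, Pi.sub_apply, sub_div]
  exact Summable.tsum_sub .of_finite .of_finite

theorem transfer_mono (hlam : 0 < lam) (T : CM lam Astar) {h g : Circle1 → ℝ} (hgh : h ≤ g) :
    transfer T h ≤ transfer T g := fun x =>
  have := T.finite_preimage hlam x
  Summable.tsum_le_tsum (fun y => div_le_div_of_nonneg_right (hgh y) (T.dmap_pos hlam y).le)
    .of_finite .of_finite

theorem transfer_zero (T : CM lam Astar) : transfer T 0 = 0 := by
  funext x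
  simp [transfer]

theorem transfer_nonneg (hlam : 0 < lam) (T : CM lam Astar) {h : Circle1 → ℝ} (hh : 0 ≤ h) :
    0 ≤ transfer T h :=
  (transfer_zero T).symm.trans_le (transfer_mono hlam T hh)

theorem transfer_mul_comp_toMap (T : CM lam Astar) (h φ : Circle1 → ℝ) :
    transfer T (fun x => h x * φ (T.toMap x)) = fun x => transfer T h x * φ x := by
  funext x
  rw [transfer, transfer, ← tsum_mul_right]
  exact tsum_congr fun y => by rw [y.2, div_mul_eq_mul_div]

theorem abs_transfer_le (hlam : 0 < lam) (T : CM lam Astar) (h : Circle1 → ℝ) (x : Circle1) :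
    |transfer T h x| ≤ transfer T (fun y => |h y|) x := by
  have := T.finite_preimage hlam x
  have : Fintype {y : Circle1 // T.toMap y = x} := .ofFinite _
  simp only [transfer, tsum_fintype]
  refine (Finset.abs_sum_le_sum_abs _ _).trans_eq (Finset.sum_congr rfl fun y _ => ?_)
  rw [abs_div, abs_of_pos (T.dmap_pos hlam y)]

theorem l1norm_transfer_le (hlam : 0 < lam) (T : CM lam Astar) {h : Circle1 → ℝ}
    (hh : Integrable h) : l1norm (transfer T h) ≤ l1norm h :=
  (integral_mono (integrable_transfer hlam T hh).abs (integrable_transfer hlam T hh.abs)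
    (abs_transfer_le hlam T h)).trans_eq (integral_transfer hlam T hh.abs)

theorem integrable_transferIter (hlam : 0 < lam) (Ts : ℕ → CM lam Astar) (k : ℕ)
    {h : Circle1 → ℝ} (hh : Integrable h) : Integrable (transferIter Ts k h) := by
  induction k with
  | zero => exact hh
  | succ k ih => exact integrable_transfer hlam _ ih

theorem integral_transferIter (hlam : 0 < lam) (Ts : ℕ → CM lam Astar) (k : ℕ)
    {h : Circle1 → ℝ} (hh : Integrable h) : ∫ x, transferIter Ts k h x = ∫ x, h x := by
  induction k with
  | zero => rfl
  | succ k ih => exact (integral_transfer hlam _ (integrable_transferIter hlam Ts k hh)).trans ih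

theorem transferIter_sub (hlam : 0 < lam) (Ts : ℕ → CM lam Astar) (k : ℕ) (h g : Circle1 → ℝ) :
    transferIter Ts k (h - g) = transferIter Ts k h - transferIter Ts k g := by
  induction k with
  | zero => rfl
  | succ k ih => simp only [transferIter, ih, transfer_sub hlam]

theorem transferIter_add (Ts : ℕ → CM lam Astar) (j m : ℕ) (h : Circle1 → ℝ) :
    transferIter Ts (j + m) h = transferIter (fun i => Ts (j + i)) m (transferIter Ts j h) := by
  induction m with
  | zero => rfl
  | succ m ih => rw [← add_assoc, transferIter, transferIter, ih, add_assoc]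

theorem arrTransfer_eq_transferIter (Tarr : ℕ → ℕ → CM lam Astar) (n k : ℕ) (h : Circle1 → ℝ) :
    arrTransfer Tarr n k h = transferIter (Tarr n) k h := by
  induction k with
  | zero => rfl
  | succ k ih => rw [arrTransfer, transferIter, ih]

theorem l1norm_transferIter_le (hlam : 0 < lam) (Ts : ℕ → CM lam Astar) (k : ℕ)
    {h : Circle1 → ℝ} (hh : Integrable h) : l1norm (transferIter Ts k h) ≤ l1norm h := by
  induction k with
  | zero => exact le_rfl
  | succ k ih => exact (l1norm_transfer_le hlam _ (integrable_transferIter hlam Ts k hh)).trans ih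

theorem l1norm_sub_le {f g h : Circle1 → ℝ} (hf : Integrable f) (hg : Integrable g)
    (hh : Integrable h) : l1norm (f - h) ≤ l1norm (f - g) + l1norm (g - h) := by
  rw [l1norm, l1norm, l1norm, ← integral_add (hf.sub hg).abs (hg.sub hh).abs]
  exact integral_mono (hf.sub hh).abs ((hf.sub hg).abs.add (hg.sub hh).abs)
    fun x => abs_sub_le (f x) (g x) (h x)

theorem transfer_indicator_preimage (T : CM lam Astar) (h : Circle1 → ℝ) (E : Set Circle1) :
    transfer T ((T.toMap ⁻¹' E).indicator h) = E.indicator (transfer T h) := by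
  have hmul (A : Set Circle1) (f : Circle1 → ℝ) : A.indicator f = fun x => f x * A.indicator 1 x :=
    funext fun x => by by_cases hx : x ∈ A <;> simp [hx]
  rw [hmul _ h, hmul _ (transfer T h), ← transfer_mul_comp_toMap]
  rfl

theorem setIntegral_transfer (hlam : 0 < lam) (T : CM lam Astar) {h : Circle1 → ℝ}
    (hh : Integrable h) {E : Set Circle1} (hE : MeasurableSet E) :
    ∫ x in E, transfer T h x = ∫ x in T.toMap ⁻¹' E, h x := by
  have hpre := T.measurable_toMap hE
  rw [← integral_indicator hE, ← integral_indicator hpre, ← transfer_indicator_preimage,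
    integral_transfer hlam T (hh.indicator hpre)]

theorem transfer_ae_eq_of_isSRBDensity (hlam : 0 < lam) {T : CM lam Astar} {r : Circle1 → ℝ}
    (hr : IsSRBDensity T r) : transfer T r =ᵐ[volume] r := by
  obtain ⟨⟨hint, -, hnonneg⟩, -, hmap⟩ := hr
  have hmass : ∀ {E}, MeasurableSet E → ∫ x in E, r x =
      (volume.withDensity (fun x => ENNReal.ofReal (r x)) E).toReal := fun {E} hE => by
    rw [withDensity_apply _ hE, integral_eq_lintegral_of_nonneg_ae (.of_forall hnonneg)
      hint.aestronglyMeasurable.restrict]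
  refine (integrable_transfer hlam T hint).ae_eq_of_forall_setIntegral_eq _ _ hint
    fun E hE _ => ?_
  have hpre := T.measurable_toMap hE
  rw [setIntegral_transfer hlam T hint hE, hmass hpre, hmass hE,
    ← Measure.map_apply T.measurable_toMap hE, hmap]

theorem l1norm_transferIter_const_sub_eq_zero (hlam : 0 < lam) {T : CM lam Astar}
    {r : Circle1 → ℝ} (hr : IsSRBDensity T r) (m : ℕ) :
    l1norm (transferIter (fun _ => T) m r - r) = 0 := by
  have hint : Integrable r := hr.1.1
  have hint' := fun k => integrable_transferIter hlam (fun _ => T) k hint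
  refine le_antisymm ?_ (integral_nonneg fun x => abs_nonneg _)
  induction m with
  | zero => simp [transferIter, l1norm]
  | succ m ih =>
    have hone : l1norm (transfer T r - r) = 0 := by
      refine integral_eq_zero_of_ae ?_
      filter_upwards [transfer_ae_eq_of_isSRBDensity hlam hr] with x hx
      simp [hx]
    calc l1norm (transfer T (transferIter (fun _ => T) m r) - r)
        ≤ l1norm (transfer T (transferIter (fun _ => T) m r) - transfer T r)
            + l1norm (transfer T r - r) :=
          l1norm_sub_le (hint' (m + 1)) (integrable_transfer hlam T hint) hint
      _ ≤ l1norm (transferIter (fun _ => T) m r - r) + 0 := by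
          rw [hone, ← transfer_sub hlam]
          exact add_le_add_left (l1norm_transfer_le hlam T ((hint' m).sub hint)) 0
      _ ≤ 0 := by rwa [add_zero]

/-! ### The cone of log-Lipschitz functions -/

/-- `u` is nonnegative and `log u` is `a`-Lipschitz. The multiplicative form makes the functions
with this property a convex cone, which contains `0`. -/
structure LogLipschitz {X : Type*} [PseudoMetricSpace X] (a : ℝ) (u : X → ℝ) : Prop where
  nonneg : ∀ x, 0 ≤ u x
  le_exp_mul : ∀ x y, u x ≤ Real.exp (a * dist x y) * u y

namespace LogLipschitz

variable {X : Type*} [PseudoMetricSpace X] {a a' : ℝ} {u : X → ℝ}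

theorem mono (hu : LogLipschitz a u) (h : a ≤ a') : LogLipschitz a' u where
  nonneg := hu.nonneg
  le_exp_mul x y := (hu.le_exp_mul x y).trans <| by
    have := hu.nonneg y
    gcongr

theorem const (ha : 0 ≤ a) {c : ℝ} (hc : 0 ≤ c) : LogLipschitz a (fun _ : X => c) where
  nonneg _ := hc
  le_exp_mul x y := le_mul_of_one_le_left hc (Real.one_le_exp (by positivity))

theorem of_abs_sub_le {K : ℝ} (hu : ∀ x y, |u x - u y| ≤ K * dist x y) (hnonneg : ∀ x, 0 ≤ u x)
    (hK : ∀ x, K ≤ a * u x) : LogLipschitz a u where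
  nonneg := hnonneg
  le_exp_mul x y := by
    calc u x ≤ u y + K * dist x y := by linarith [le_abs_self (u x - u y), hu x y]
      _ ≤ u y + a * u y * dist x y := by gcongr; exact hK y
      _ = (a * dist x y + 1) * u y := by ring
      _ ≤ Real.exp (a * dist x y) * u y := by
        gcongr
        exacts [hnonneg y, Real.add_one_le_exp _]

theorem continuous (hu : LogLipschitz a u) : Continuous u := by
  refine continuous_iff_continuousAt.2 fun y => ?_
  have hdist : Tendsto (fun x => a * dist x y) (𝓝 y) (𝓝 0) := by
    simpa using ((continuous_id.dist (continuous_const (y := y))).tendsto y).const_mul a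
  have hupper : Tendsto (fun x => Real.exp (a * dist x y) * u y) (𝓝 y) (𝓝 (u y)) := by
    simpa using ((Real.continuous_exp.tendsto 0).comp hdist).mul_const (u y)
  have hlower : Tendsto (fun x => Real.exp (-(a * dist x y)) * u y) (𝓝 y) (𝓝 (u y)) := by
    simpa using ((Real.continuous_exp.tendsto _).comp hdist.neg).mul_const (u y)
  refine tendsto_of_tendsto_of_tendsto_of_le_of_le hlower hupper (fun x => ?_)
    fun x => hu.le_exp_mul x y
  rw [Real.exp_neg, inv_mul_le_iff₀ (Real.exp_pos _), dist_comm]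
  exact hu.le_exp_mul y x

theorem exp_neg_mul_integral_le [MeasurableSpace X] {μ : Measure X} [IsProbabilityMeasure μ]
    (hu : LogLipschitz a u) (hint : Integrable u μ) (ha : 0 ≤ a) {D : ℝ} (x : X)
    (hD : ∀ y, dist y x ≤ D) : Real.exp (-(a * D)) * ∫ y, u y ∂μ ≤ u x := by
  rw [Real.exp_neg, inv_mul_le_iff₀ (Real.exp_pos _)]
  calc ∫ y, u y ∂μ ≤ ∫ _, Real.exp (a * D) * u x ∂μ :=
        integral_mono hint (integrable_const _) fun y => (hu.le_exp_mul y x).trans <| by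
          have := hu.nonneg x
          have := hD y
          gcongr
    _ = Real.exp (a * D) * u x := by simp

/-- By convexity of `exp`, the gap between the apertures `a'` and `a` leaves room for removing a
fixed proportion of any lower bound of `u`. -/
theorem sub_const (hu : LogLipschitz a' u) (ha' : 0 ≤ a') (haa' : a' < a) {m : ℝ}
    (hm : ∀ x, m ≤ u x) : LogLipschitz a (fun x => u x - (1 - a' / a) * m) where
  nonneg x := by
    have hq : 0 ≤ a' / a := div_nonneg ha' (ha'.trans haa'.le)
    have hq1 : a' / a ≤ 1 := div_le_one_of_le₀ haa'.le (ha'.trans haa'.le)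
    nlinarith [hu.nonneg x, mul_le_mul_of_nonneg_left (hm x) (sub_nonneg.2 hq1)]
  le_exp_mul x y := by
    have ha : 0 < a := ha'.trans_lt haa'
    have hq : 0 ≤ a' / a := div_nonneg ha' ha.le
    have hq1 : 0 ≤ 1 - a' / a := sub_nonneg.2 (div_le_one_of_le₀ haa'.le ha.le)
    have hconv : Real.exp (a' * dist x y) ≤ a' / a * Real.exp (a * dist x y) + (1 - a' / a) := by
      have h := convexOn_exp.2 (mem_univ (a * dist x y)) (mem_univ 0) hq hq1 (by ring)
      simpa [← mul_assoc, div_mul_cancel₀ _ ha.ne'] using h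
    have hexp : 0 ≤ Real.exp (a * dist x y) - 1 := sub_nonneg.2 (Real.one_le_exp (by positivity))
    calc u x - (1 - a' / a) * m
        ≤ (a' / a * Real.exp (a * dist x y) + (1 - a' / a)) * u y - (1 - a' / a) * m := by
          gcongr
          exact (hu.le_exp_mul x y).trans (mul_le_mul_of_nonneg_right hconv (hu.nonneg y))
      _ = Real.exp (a * dist x y) * (u y - (1 - a' / a) * m)
            - (Real.exp (a * dist x y) - 1) * ((1 - a' / a) * (u y - m)) := by ring
      _ ≤ Real.exp (a * dist x y) * (u y - (1 - a' / a) * m) :=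
          sub_le_self _ (mul_nonneg hexp (mul_nonneg hq1 (sub_nonneg.2 (hm y))))

end LogLipschitz

theorem div_le_exp_mul_div {w w' p p' c s τ : ℝ} (hw : w ≤ Real.exp s * w') (hw' : 0 ≤ w')
    (hc : 0 < c) (hp : c ≤ p) (hp' : 0 < p') (hτ : 0 ≤ τ) (hpp' : p' ≤ p + τ) :
    w / p ≤ Real.exp (s + τ / c) * (w' / p') := by
  have hp0 : 0 < p := hc.trans_le hp
  have hratio : p' ≤ Real.exp (τ / c) * p := by
    calc p' ≤ (τ / p + 1) * p := by rw [add_mul, div_mul_cancel₀ _ hp0.ne']; linarith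
      _ ≤ (τ / c + 1) * p := by gcongr
      _ ≤ Real.exp (τ / c) * p := by gcongr; exact Real.add_one_le_exp _
  rw [← mul_div_assoc, div_le_div_iff₀ hp0 hp']
  calc w * p' ≤ Real.exp s * w' * p' := by gcongr
    _ ≤ Real.exp s * w' * (Real.exp (τ / c) * p) := by gcongr
    _ = Real.exp (s + τ / c) * w' * p := by rw [Real.exp_add]; ring

theorem dist_coe_le_abs_sub (x y : ℝ) : dist (x : Circle1) (y : Circle1) ≤ |x - y| := by
  rw [dist_eq_norm, ← AddCircle.coe_sub, UnitAddCircle.norm_eq]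
  simpa using round_le (x - y) 0

theorem exists_coe_abs_sub_eq_dist (x y : Circle1) :
    ∃ a b : ℝ, (a : Circle1) = x ∧ (b : Circle1) = y ∧ |a - b| = dist x y := by
  obtain ⟨b, rfl⟩ := QuotientAddGroup.mk_surjective y
  obtain ⟨d, hd⟩ := QuotientAddGroup.mk_surjective (x - (b : Circle1))
  refine ⟨b + (d - round d), b, ?_, rfl, ?_⟩
  · rw [AddCircle.coe_add, sub_eq_add_neg d, ← Int.cast_neg, coe_add_int]
    exact (congrArg _ hd).trans (add_sub_cancel _ _)
  · rw [add_sub_cancel_left, dist_eq_norm]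
    exact (UnitAddCircle.norm_eq.symm.trans (congrArg norm hd))

theorem dist_le_half (x y : Circle1) : dist x y ≤ 1 / 2 := by
  rw [dist_eq_norm]
  simpa using AddCircle.norm_le_half_period (1 : ℝ) (x := x - y) one_ne_zero

theorem LogLipschitz.transfer (hlam : 0 < lam) (T : CM lam Astar) {a : ℝ} (ha : 0 ≤ a)
    {u : Circle1 → ℝ} (hu : LogLipschitz a u) :
    LogLipschitz (a / lam + Astar / lam ^ 2) (transfer T u) where
  nonneg := transfer_nonneg hlam T hu.nonneg
  le_exp_mul x y := by
    obtain ⟨x, y, rfl, rfl, hxy⟩ := exists_coe_abs_sub_eq_dist x y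
    rw [← hxy, T.transfer_coe hlam, T.transfer_coe hlam, Finset.mul_sum]
    refine Finset.sum_le_sum fun j _ => ?_
    set p := (T.liftIso hlam).symm (x + j)
    set q := (T.liftIso hlam).symm (y + j)
    have hpq : |p - q| ≤ |x - y| / lam := by
      rw [le_div_iff₀' hlam]
      simpa using T.mul_abs_symm_sub_le hlam (x + j) (y + j)
    have hA := T.secondBound_nonneg
    have hupq : u p ≤ Real.exp (a * (|x - y| / lam)) * u q := by
      refine (hu.le_exp_mul p q).trans ?_
      have := (dist_coe_le_abs_sub p q).trans hpq
      have := hu.nonneg q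
      gcongr
    have hderiv : deriv T.F q ≤ deriv T.F p + Astar * (|x - y| / lam) := by
      have h : Astar * |p - q| ≤ Astar * (|x - y| / lam) := by gcongr
      linarith [(abs_le.1 (T.abs_deriv_lift_sub_le p q)).1]
    refine (div_le_exp_mul_div hupq (hu.nonneg _) hlam (T.expanding p) (T.deriv_lift_pos hlam q)
      (by positivity) hderiv).trans_eq ?_
    rw [CM.branchWeight]
    congr 2
    field_simp

section LipschitzDense

variable {X : Type*} [MetricSpace X] [CompactSpace X]

theorem closure_setOf_lipschitzWith_eq_top :
    closure {f : C(X, ℝ) | ∃ K, LipschitzWith K f} = ⊤ := by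
  refine ContinuousMap.sublattice_closure_eq_top _ ⟨0, 0, LipschitzWith.const 0⟩ ?_ ?_ ?_
  · rintro f ⟨K, hf⟩ g ⟨K', hg⟩
    exact ⟨_, hf.min hg⟩
  · rintro f ⟨K, hf⟩ g ⟨K', hg⟩
    exact ⟨_, hf.max hg⟩
  · intro v x y
    set c := (v y - v x) / dist y x
    refine ⟨⟨fun w => v x + c * dist w x, by fun_prop⟩, ⟨Real.nnabs c, ?_⟩, by simp, ?_⟩
    · refine LipschitzWith.of_dist_le_mul fun w w' => ?_
      simp only [ContinuousMap.coe_mk, dist_add_left, Real.coe_nnabs, Real.dist_eq, ← mul_sub,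
        abs_mul]
      gcongr
      exact abs_dist_sub_le w w' x
    · rcases eq_or_ne y x with rfl | hyx
      · simp
      · simp [c, div_mul_cancel₀ _ (dist_ne_zero.2 hyx)]

theorem exists_lipschitzWith_integral_abs_sub_le [MeasurableSpace X] [BorelSpace X]
    {μ : Measure X} [IsProbabilityMeasure μ] {f : X → ℝ} (hf : Integrable f μ) {ε : ℝ}
    (hε : 0 < ε) : ∃ (K : NNReal) (v : X → ℝ), LipschitzWith K v ∧ ∫ x, |f x - v x| ∂μ ≤ ε := by
  obtain ⟨g, hfg, hg⟩ := hf.exists_boundedContinuous_integral_sub_le (half_pos hε)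
  have hmem : g.toContinuousMap ∈ closure {f : C(X, ℝ) | ∃ K, LipschitzWith K f} :=
    closure_setOf_lipschitzWith_eq_top (X := X) ▸ mem_univ _
  obtain ⟨v, ⟨K, hv⟩, hgv⟩ := Metric.mem_closure_iff.1 hmem _ (half_pos hε)
  have hvint : Integrable v μ := hv.continuous.integrable_of_hasCompactSupport (.of_compactSpace _)
  have hfgint : Integrable (fun x => |f x - g x|) μ := (hf.sub hg).abs
  have hsup (x : X) : |g x - v x| ≤ ε / 2 :=
    (ContinuousMap.dist_apply_le_dist (f := g.toContinuousMap) x).trans hgv.le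
  refine ⟨K, v, hv, ?_⟩
  calc ∫ x, |f x - v x| ∂μ ≤ ∫ x, (|f x - g x| + ε / 2) ∂μ :=
        integral_mono (hf.sub hvint).abs (hfgint.add (integrable_const _)) fun x =>
          (abs_sub_le _ (g x) _).trans (add_le_add_right (hsup x) _)
    _ = ∫ x, |f x - g x| ∂μ + ε / 2 := by simp [integral_add hfgint (integrable_const _)]
    _ ≤ ε := by linarith [show ∫ x, |f x - g x| ∂μ ≤ ε / 2 from hfg]

end LipschitzDense

/-! ### Memory loss -/

instance : IsProbabilityMeasure (volume : Measure Circle1) :=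
  ⟨UnitAddCircle.measure_univ⟩

theorem l1norm_sub_le_integral_add {u v : Circle1 → ℝ} (hu : Integrable u) (hv : Integrable v)
    (hu0 : ∀ x, 0 ≤ u x) (hv0 : ∀ x, 0 ≤ v x) : l1norm (u - v) ≤ (∫ x, u x) + ∫ x, v x := by
  rw [← integral_add hu hv]
  refine integral_mono (hu.sub hv).abs (hu.add hv) fun x => abs_le.2 ?_
  constructor <;> simp only [Pi.sub_apply] <;> linarith [hu0 x, hv0 x]

theorem LogLipschitz.integrable {a : ℝ} {u : Circle1 → ℝ} (hu : LogLipschitz a u) :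
    Integrable u :=
  hu.continuous.integrable_of_hasCompactSupport (.of_compactSpace _)

/-- An aperture `a` for which every transfer operator maps the cone of `a`-log-Lipschitz functions
into the cone of `(a - 1)`-log-Lipschitz functions. -/
noncomputable def coneAperture (lam Astar : ℝ) : ℝ := (Astar + 1) * lam / (lam - 1)

theorem one_lt_coneAperture (hlam : 1 < lam) (hA : 0 ≤ Astar) : 1 < coneAperture lam Astar := by
  rw [coneAperture, one_lt_div (sub_pos.2 hlam)]
  nlinarith

theorem coneAperture_div_add (hlam : 1 < lam) :
    coneAperture lam Astar / lam + Astar = coneAperture lam Astar - 1 := by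
  have : lam - 1 ≠ 0 := (sub_pos.2 hlam).ne'
  rw [coneAperture]
  field_simp
  ring

/-- The factor by which one transfer operator reduces the integral of the part of a function in
the cone that is not yet a constant; `1 / 2` is the diameter of the circle. -/
noncomputable def contractionRate (lam Astar : ℝ) : ℝ :=
  1 - 1 / coneAperture lam Astar * Real.exp (-((coneAperture lam Astar - 1) * (1 / 2)))

theorem contractionRate_mem_Ioo (hlam : 1 < lam) (hA : 0 ≤ Astar) :
    contractionRate lam Astar ∈ Ioo 0 1 := by
  have ha := one_lt_coneAperture hlam hA
  have hexp : Real.exp (-((coneAperture lam Astar - 1) * (1 / 2))) < 1 :=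
    Real.exp_lt_one_iff.2 (by linarith)
  have hinv : 1 / coneAperture lam Astar < 1 := (div_lt_one (by linarith)).2 ha
  have hinv0 : 0 < 1 / coneAperture lam Astar := by positivity
  exact ⟨sub_pos.2 (mul_lt_one_of_nonneg_of_lt_one_left hinv0.le hinv hexp.le),
    sub_lt_self _ (mul_pos hinv0 (Real.exp_pos _))⟩

theorem LogLipschitz.transfer_coneAperture (hlam : 1 < lam) (T : CM lam Astar) {u : Circle1 → ℝ}
    (hu : LogLipschitz (coneAperture lam Astar) u) :
    LogLipschitz (coneAperture lam Astar - 1) (_root_.transfer T u) := by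
  have hA := T.secondBound_nonneg
  have ha := one_lt_coneAperture hlam hA
  refine (hu.transfer (by linarith) T (by linarith)).mono ?_
  rw [← coneAperture_div_add hlam]
  gcongr
  exact div_le_self hA (one_le_pow₀ hlam.le)

theorem LogLipschitz.transferIter (hlam : 1 < lam) (Ts : ℕ → CM lam Astar) {u : Circle1 → ℝ}
    (hu : LogLipschitz (coneAperture lam Astar) u) (k : ℕ) :
    LogLipschitz (coneAperture lam Astar) (_root_.transferIter Ts k u) := by
  induction k with
  | zero => exact hu
  | succ k ih => exact (ih.transfer_coneAperture hlam (Ts (k + 1))).mono (sub_le_self _ zero_le_one)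

/-- The common part which coupling removes: any two functions in the cone with the same integral
have, after one step, the same multiple of the constant function in common. -/
theorem LogLipschitz.transfer_sub_const (hlam : 1 < lam) (T : CM lam Astar) {u : Circle1 → ℝ}
    (hu : LogLipschitz (coneAperture lam Astar) u) :
    LogLipschitz (coneAperture lam Astar)
      fun x => _root_.transfer T u x - (1 - contractionRate lam Astar) * ∫ y, u y := by
  have ha := one_lt_coneAperture hlam T.secondBound_nonneg
  have hTu := hu.transfer_coneAperture hlam T
  have hm (x : Circle1) := hTu.exp_neg_mul_integral_le hTu.integrable (by linarith) x
    fun y => dist_le_half y x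
  have hcoef : 1 - contractionRate lam Astar =
      (1 - (coneAperture lam Astar - 1) / coneAperture lam Astar) *
        Real.exp (-((coneAperture lam Astar - 1) * (1 / 2))) := by
    rw [contractionRate, sub_sub_cancel, one_sub_div (by linarith), sub_sub_cancel]
  rw [hcoef, ← integral_transfer (by linarith) T hu.integrable]
  simpa only [mul_assoc] using hTu.sub_const (by linarith) (sub_one_lt _) hm

theorem exists_logLipschitz_transferIter_sub_eq (hlam : 1 < lam) (Ts : ℕ → CM lam Astar)
    {u v : Circle1 → ℝ} (hu : LogLipschitz (coneAperture lam Astar) u)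
    (hv : LogLipschitz (coneAperture lam Astar) v) (huv : ∫ x, u x = ∫ x, v x) (k : ℕ) :
    ∃ u' v' : Circle1 → ℝ, LogLipschitz (coneAperture lam Astar) u' ∧
      LogLipschitz (coneAperture lam Astar) v' ∧
      transferIter Ts k u - transferIter Ts k v = u' - v' ∧
      ∫ x, u' x = contractionRate lam Astar ^ k * ∫ x, u x ∧ ∫ x, v' x = ∫ x, u' x := by
  have hlam0 : 0 < lam := by linarith
  induction k with
  | zero => exact ⟨u, v, hu, hv, rfl, by simp, huv.symm⟩
  | succ k ih =>
    obtain ⟨u', v', hu', hv', hsub, hintu, hintv⟩ := ih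
    have hint {w : Circle1 → ℝ} (hw : LogLipschitz (coneAperture lam Astar) w) :
        ∫ x, (transfer (Ts (k + 1)) w x - (1 - contractionRate lam Astar) * ∫ y, w y) =
          contractionRate lam Astar * ∫ y, w y := by
      rw [integral_sub (integrable_transfer hlam0 _ hw.integrable) (integrable_const _),
        integral_transfer hlam0 _ hw.integrable, integral_const, probReal_univ]
      simp only [smul_eq_mul]
      ring
    refine ⟨_, _, hu'.transfer_sub_const hlam (Ts (k + 1)),
      hv'.transfer_sub_const hlam (Ts (k + 1)), ?_, ?_, ?_⟩
    · rw [transferIter, transferIter, ← transfer_sub hlam0, hsub, transfer_sub hlam0, hintv]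
      funext x
      simp only [Pi.sub_apply]
      ring
    · rw [hint hu', hintu, pow_succ']
      ring
    · rw [hint hu', hint hv', hintv]

theorem l1norm_transferIter_sub_le (hlam : 1 < lam) (Ts : ℕ → CM lam Astar)
    {u v : Circle1 → ℝ} (hu : LogLipschitz (coneAperture lam Astar) u)
    (hv : LogLipschitz (coneAperture lam Astar) v) (huv : ∫ x, u x = ∫ x, v x) (k : ℕ) :
    l1norm (transferIter Ts k u - transferIter Ts k v) ≤
      2 * contractionRate lam Astar ^ k * ∫ x, u x := by
  obtain ⟨u', v', hu', hv', hsub, hintu, hintv⟩ :=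
    exists_logLipschitz_transferIter_sub_eq hlam Ts hu hv huv k
  rw [hsub]
  have h := l1norm_sub_le_integral_add hu'.integrable hv'.integrable hu'.nonneg hv'.nonneg
  rw [hintv, hintu] at h
  linarith

/-- A Lipschitz function of zero mean becomes log-Lipschitz once a constant comparable to its
Lipschitz constant is added. -/
theorem l1norm_transferIter_le_of_lipschitzWith (hlam : 1 < lam) (Ts : ℕ → CM lam Astar)
    {K : NNReal} {v : Circle1 → ℝ} (hv : LipschitzWith K v) (hv0 : ∫ x, v x = 0) (k : ℕ) :
    l1norm (transferIter Ts k v) ≤ 4 * K * contractionRate lam Astar ^ k := by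
  have ha := one_lt_coneAperture hlam (Ts 0).secondBound_nonneg
  have hvint : Integrable v := hv.continuous.integrable_of_hasCompactSupport (.of_compactSpace _)
  have hv_ge (x : Circle1) : -K ≤ v x := by
    have hmean : ∫ y, v y ≤ ∫ _ : Circle1, (v x + K) := integral_mono hvint (integrable_const _)
      fun y => by
        have hdist := mul_le_mul_of_nonneg_left (dist_le_half y x) K.2
        have hle := (le_abs_self _).trans (hv.dist_le_mul y x)
        simp only [NNReal.val_eq_coe] at hdist
        linarith [K.coe_nonneg]
    rw [hv0, integral_const, probReal_univ, one_smul] at hmean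
    linarith
  set w : Circle1 → ℝ := v + fun _ => 2 * (K : ℝ) with hw
  have hshift : LogLipschitz (coneAperture lam Astar) w := by
    refine .of_abs_sub_le (K := K) (fun x y => ?_) (fun x => ?_) fun x => ?_
    · simpa [w, Real.dist_eq] using hv.dist_le_mul x y
    · simp only [w, Pi.add_apply]
      linarith [hv_ge x, K.coe_nonneg]
    · simp only [w, Pi.add_apply]
      nlinarith [hv_ge x, K.coe_nonneg]
  have hint : ∫ x, w x = ∫ _ : Circle1, 2 * (K : ℝ) := by
    simp [w, integral_add hvint (integrable_const _), hv0]
  have h := l1norm_transferIter_sub_le hlam Ts hshift (.const (by linarith) (by positivity)) hint k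
  rw [← transferIter_sub (by linarith), hw, add_sub_cancel_right, ← hw, hint] at h
  refine h.trans_eq ?_
  simp only [integral_const, probReal_univ, smul_eq_mul]
  ring

theorem l1norm_transferIter_le_of_lipschitzWith_approx (hlam : 1 < lam) (Ts : ℕ → CM lam Astar)
    {f v : Circle1 → ℝ} (hf : Integrable f) (hf0 : ∫ x, f x = 0) {K : NNReal}
    (hv : LipschitzWith K v) (k : ℕ) :
    l1norm (transferIter Ts k f) ≤
      2 * l1norm (f - v) + 4 * K * contractionRate lam Astar ^ k := by
  have hlam0 : 0 < lam := by linarith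
  have hvint : Integrable v := hv.continuous.integrable_of_hasCompactSupport (.of_compactSpace _)
  set c := ∫ x, v x
  set w : Circle1 → ℝ := v - fun _ => c
  have hw : LipschitzWith K w := .of_dist_le_mul fun x y => by simpa [w] using hv.dist_le_mul x y
  have hwint : Integrable w := hvint.sub (integrable_const c)
  have hw0 : ∫ x, w x = 0 := by simp [w, integral_sub hvint (integrable_const c), c]
  have hc : |c| ≤ l1norm (f - v) := by
    have h := abs_integral_le_integral_abs (f := f - v) (μ := volume)
    rw [integral_sub' hf hvint, hf0, zero_sub, abs_neg] at h
    exact h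
  have hfw : l1norm (f - w) ≤ 2 * l1norm (f - v) := by
    have hconst : l1norm (v - w) = |c| := by simp [l1norm, w]
    linarith [l1norm_sub_le hf hvint hwint]
  have htri : l1norm (transferIter Ts k f) ≤
      l1norm (transferIter Ts k (f - w)) + l1norm (transferIter Ts k w) := by
    have h := l1norm_sub_le (integrable_transferIter hlam0 Ts k hf)
      (integrable_transferIter hlam0 Ts k hwint) (integrable_zero _ _ _)
    rwa [← transferIter_sub hlam0, sub_zero, sub_zero] at h
  linarith [l1norm_transferIter_le hlam0 Ts k (hf.sub hwint),
    l1norm_transferIter_le_of_lipschitzWith hlam Ts hw hw0 k]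

theorem tendsto_l1norm_transferIter (hlam : 1 < lam) (Ts : ℕ → CM lam Astar) {f : Circle1 → ℝ}
    (hf : Integrable f) (hf0 : ∫ x, f x = 0) :
    Tendsto (fun k => l1norm (transferIter Ts k f)) atTop (𝓝 0) := by
  have hθ := contractionRate_mem_Ioo hlam (Ts 0).secondBound_nonneg
  refine tendsto_order.2 ⟨fun b hb => .of_forall fun k =>
    hb.trans_le (integral_nonneg fun x => abs_nonneg _), fun b hb => ?_⟩
  obtain ⟨K, v, hv, hfv⟩ := exists_lipschitzWith_integral_abs_sub_le hf (div_pos hb four_pos)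
  have hdecay : Tendsto (fun k => 4 * K * contractionRate lam Astar ^ k) atTop (𝓝 0) := by
    simpa using (tendsto_pow_atTop_nhds_zero_of_lt_one hθ.1.le hθ.2).const_mul (4 * (K : ℝ))
  filter_upwards [hdecay.eventually_lt_const (half_pos hb)] with k hk
  linarith [l1norm_transferIter_le_of_lipschitzWith_approx hlam Ts hf hf0 hv k,
    show l1norm (f - v) ≤ b / 4 from hfv]

theorem l1norm_transferIter_sub_le_of_isSRBDensity (hlam : 1 < lam) {T : CM lam Astar}
    {r : Circle1 → ℝ} (hr : IsSRBDensity T r) {u : Circle1 → ℝ}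
    (hu : LogLipschitz (coneAperture lam Astar) u) (hu1 : ∫ x, u x = 1) (m : ℕ) :
    l1norm (transferIter (fun _ => T) m u - r) ≤ 2 * contractionRate lam Astar ^ m := by
  have hlam0 : 0 < lam := by linarith
  have hint {f : Circle1 → ℝ} (hf : Integrable f) (k : ℕ) :
      Integrable (transferIter (fun _ => T) k f) := integrable_transferIter hlam0 _ k hf
  have hr1 : ∫ x, (u - r) x = 0 := by
    rw [integral_sub' hu.integrable hr.1.1, hu1, hr.1.2.1, sub_self]
  have hdist (k : ℕ) : l1norm (transferIter (fun _ => T) m u - r) ≤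
      2 * contractionRate lam Astar ^ m + l1norm (transferIter (fun _ => T) (k + m) (u - r)) := by
    have hforget := l1norm_transferIter_sub_le hlam (fun _ => T) hu
      (hu.transferIter hlam (fun _ => T) k)
      (integral_transferIter hlam0 (fun _ => T) k hu.integrable).symm m
    rw [← transferIter_add (fun _ => T) k m u, hu1, mul_one] at hforget
    have hfix := l1norm_sub_le (hint hu.integrable (k + m)) (hint hr.1.1 (k + m)) hr.1.1
    rw [l1norm_transferIter_const_sub_eq_zero hlam0 hr, add_zero, ← transferIter_sub hlam0] at hfix
    linarith [l1norm_sub_le (hint hu.integrable m) (hint hu.integrable (k + m)) hr.1.1]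
  have hlim := ((tendsto_l1norm_transferIter hlam (fun _ => T) (hu.integrable.sub hr.1.1) hr1).comp
    (tendsto_add_atTop_nat m)).const_add (2 * contractionRate lam Astar ^ m)
  rw [add_zero] at hlim
  exact ge_of_tendsto' hlim hdist

/-! ### Perturbation of the map -/

section Distance

theorem dC1_nonneg (S T : CM lam Astar) : 0 ≤ dC1 S T :=
  add_nonneg (Real.iSup_nonneg fun _ => dist_nonneg) (Real.iSup_nonneg fun _ => abs_nonneg _)

theorem bddAbove_range_dist_toMap (S T : CM lam Astar) :
    BddAbove (range fun x => dist (S.toMap x) (T.toMap x)) :=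
  ⟨1 / 2, forall_mem_range.2 fun _ => dist_le_half _ _⟩

theorem bddAbove_range_abs_dmap_sub (S T : CM lam Astar) :
    BddAbove (range fun x => |S.dmap x - T.dmap x|) := by
  have hcont : Continuous fun x => |deriv S.F x - deriv T.F x| :=
    (S.differentiable_deriv_lift.continuous.sub T.differentiable_deriv_lift.continuous).abs
  refine (isCompact_Icc.bddAbove_image (hcont.continuousOn (s := Icc 0 1))).mono ?_
  rintro _ ⟨x, rfl⟩
  have hx := (AddCircle.equivIco (1 : ℝ) 0 x).2
  exact ⟨_, ⟨hx.1, (hx.2.trans_eq (zero_add 1)).le⟩, rfl⟩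

theorem dist_toMap_le_dC1 (S T : CM lam Astar) (x : Circle1) :
    dist (S.toMap x) (T.toMap x) ≤ dC1 S T :=
  (le_ciSup (bddAbove_range_dist_toMap S T) x).trans <|
    le_add_of_nonneg_right (Real.iSup_nonneg fun _ => abs_nonneg _)

theorem abs_dmap_sub_le_dC1 (S T : CM lam Astar) (x : Circle1) :
    |S.dmap x - T.dmap x| ≤ dC1 S T :=
  (le_ciSup (bddAbove_range_abs_dmap_sub S T) x).trans <|
    le_add_of_nonneg_left (Real.iSup_nonneg fun _ => dist_nonneg)

theorem dC1_triangle (S R T : CM lam Astar) : dC1 S T ≤ dC1 S R + dC1 R T := by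
  have htriangle := add_le_add
    (ciSup_le fun x => (dist_triangle (S.toMap x) (R.toMap x) (T.toMap x)).trans (add_le_add
      (le_ciSup (bddAbove_range_dist_toMap S R) x) (le_ciSup (bddAbove_range_dist_toMap R T) x)))
    (ciSup_le fun x => (abs_sub_le (S.dmap x) (R.dmap x) (T.dmap x)).trans (add_le_add
      (le_ciSup (bddAbove_range_abs_dmap_sub S R) x)
      (le_ciSup (bddAbove_range_abs_dmap_sub R T) x)))
  rw [dC1, dC1, dC1]
  linarith

theorem dC1_comm (S T : CM lam Astar) : dC1 S T = dC1 T S := by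
  simp only [dC1, dist_comm (S.toMap _), abs_sub_comm (S.dmap _)]

theorem abs_lift_sub_sub_le (S T : CM lam Astar) (x y : ℝ) :
    |(S.F x - T.F x) - (S.F y - T.F y)| ≤ dC1 S T * |x - y| := by
  refine convex_univ.norm_image_sub_le_of_norm_deriv_le (f := fun z => S.F z - T.F z)
    (fun z _ => (S.differentiable_lift z).sub (T.differentiable_lift z)) (fun z _ => ?_)
    (mem_univ y) (mem_univ x)
  rw [deriv_fun_sub (S.differentiable_lift z) (T.differentiable_lift z), ← S.dmap_coe,
    ← T.dmap_coe]
  exact abs_dmap_sub_le_dC1 S T z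

theorem deg_eq_of_dC1_lt_one {S T : CM lam Astar} (h : dC1 S T < 1) : S.deg = T.deg := by
  have hle := abs_lift_sub_sub_le S T (0 + 1) 0
  rw [S.lift_add_one, T.lift_add_one, add_sub_add_comm, add_sub_cancel_left] at hle
  have hlt : |((S.deg - T.deg : ℤ) : ℝ)| < 1 := by
    push_cast
    simpa using hle.trans_lt (by simpa using h)
  exact sub_eq_zero.1 (Int.abs_lt_one_iff.1 (by exact_mod_cast hlt))

theorem exists_int_abs_lift_sub_sub_le {S T : CM lam Astar} (h : dC1 S T < 1) :
    ∃ p : ℤ, ∀ x, |S.F x - T.F x - p| ≤ 2 * dC1 S T := by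
  have hzero := dist_toMap_le_dC1 S T (0 : ℝ)
  rw [S.toMap_coe, T.toMap_coe, dist_eq_norm, ← AddCircle.coe_sub, UnitAddCircle.norm_eq] at hzero
  refine ⟨round (S.F 0 - T.F 0), fun x => ?_⟩
  have hper : Function.Periodic (fun x => S.F x - T.F x) 1 := fun y => by
    simp only [S.lift_add_one, T.lift_add_one, deg_eq_of_dC1_lt_one h, add_sub_add_right_eq_sub]
  obtain ⟨y, hy, hxy⟩ := hper.exists_mem_Ico₀ one_pos x
  have hvar : dC1 S T * |y - 0| ≤ dC1 S T := by
    rw [sub_zero, abs_of_nonneg hy.1]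
    exact mul_le_of_le_one_right (dC1_nonneg S T) hy.2.le
  have hy0 := abs_lift_sub_sub_le S T y 0
  have habs := abs_sub_le (S.F y - T.F y) (S.F 0 - T.F 0) (round (S.F 0 - T.F 0))
  rw [hxy]
  linarith

theorem exists_int_abs_symm_sub_symm_le (hlam : 1 < lam) {S T : CM lam Astar} (h : dC1 S T < 1) :
    ∃ p : ℤ, ∀ y, |(S.liftIso (one_pos.trans hlam)).symm y -
      (T.liftIso (one_pos.trans hlam)).symm (y + p)| ≤ 2 * dC1 S T := by
  obtain ⟨p, hp⟩ := exists_int_abs_lift_sub_sub_le h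
  refine ⟨-p, fun y => ?_⟩
  set q := (S.liftIso (one_pos.trans hlam)).symm y with hq
  set r := (T.liftIso (one_pos.trans hlam)).symm (y + (-p : ℤ)) with hr
  have hshift : T.F q - T.F r = -(S.F q - T.F q - p) := by
    rw [hq, hr, S.lift_symm, T.lift_symm]
    push_cast
    ring
  calc |q - r| ≤ lam * |q - r| := le_mul_of_one_le_left (abs_nonneg _) hlam.le
    _ ≤ |T.F q - T.F r| := T.mul_abs_sub_le_abs_lift_sub q r
    _ ≤ 2 * dC1 S T := by
      rw [hshift, abs_neg]
      exact hp q

end Distance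

section Perturbation

/-- The rate in `ℒ_S u ≤ exp (distortionRate * dC1 S T) * ℒ_T u`, for `u` in the cone. -/
noncomputable def distortionRate (lam Astar : ℝ) : ℝ := 2 * coneAperture lam Astar + 2 * Astar + 1

theorem distortionRate_nonneg (hlam : 1 < lam) (hA : 0 ≤ Astar) : 0 ≤ distortionRate lam Astar := by
  have := one_lt_coneAperture hlam hA
  rw [distortionRate]
  linarith

theorem LogLipschitz.transfer_le_exp_mul_transfer (hlam : 1 < lam) {S T : CM lam Astar}
    (h : dC1 S T < 1) {u : Circle1 → ℝ} (hu : LogLipschitz (coneAperture lam Astar) u)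
    (x : Circle1) : _root_.transfer S u x ≤
      Real.exp (distortionRate lam Astar * dC1 S T) * _root_.transfer T u x := by
  have hlam0 : 0 < lam := by linarith
  have hA := S.secondBound_nonneg
  have ha := one_lt_coneAperture hlam hA
  have hδ := dC1_nonneg S T
  obtain ⟨x, rfl⟩ := QuotientAddGroup.mk_surjective x
  obtain ⟨p, hp⟩ := exists_int_abs_symm_sub_symm_le hlam h
  change _root_.transfer S u (x : Circle1) ≤ _ * _root_.transfer T u (x : Circle1)
  rw [← coe_add_int x p, T.transfer_coe hlam0, coe_add_int, S.transfer_coe hlam0,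
    deg_eq_of_dC1_lt_one h, Finset.mul_sum]
  refine Finset.sum_le_sum fun j _ => ?_
  have hqr := hp (x + j)
  rw [add_right_comm] at hqr
  set q := (S.liftIso hlam0).symm (x + j)
  set r := (T.liftIso hlam0).symm (x + p + j)
  have huqr : u q ≤ Real.exp (coneAperture lam Astar * (2 * dC1 S T)) * u r := by
    refine (hu.le_exp_mul q r).trans ?_
    have := (dist_coe_le_abs_sub q r).trans hqr
    have := hu.nonneg r
    gcongr
  have hderiv : deriv T.F r ≤ deriv S.F q + (2 * Astar + 1) * dC1 S T := by
    have hST := abs_dmap_sub_le_dC1 S T r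
    rw [S.dmap_coe, T.dmap_coe] at hST
    have hmul : Astar * |q - r| ≤ Astar * (2 * dC1 S T) := by gcongr
    linarith [(abs_le.1 hST).1, (abs_le.1 (S.abs_deriv_lift_sub_le q r)).1]
  refine (div_le_exp_mul_div huqr (hu.nonneg _) one_pos (hlam.le.trans (S.expanding q))
    (T.deriv_lift_pos hlam0 r) (by positivity) hderiv).trans_eq ?_
  rw [CM.branchWeight, distortionRate]
  congr 2
  ring

theorem exp_mul_sub_one_le {κ δ : ℝ} (hδ0 : 0 ≤ δ) (hδ1 : δ ≤ 1) :
    Real.exp (κ * δ) - 1 ≤ Real.exp κ * δ := by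
  have h := convexOn_exp.2 (mem_univ κ) (mem_univ 0) hδ0 (sub_nonneg.2 hδ1) (by ring)
  simp only [smul_eq_mul, mul_zero, add_zero, Real.exp_zero, mul_one] at h
  rw [mul_comm κ]
  linarith [mul_comm δ (Real.exp κ)]

theorem LogLipschitz.abs_transfer_sub_transfer_le (hlam : 1 < lam) (S T : CM lam Astar)
    {u : Circle1 → ℝ} (hu : LogLipschitz (coneAperture lam Astar) u) (x : Circle1) :
    |_root_.transfer S u x - _root_.transfer T u x| ≤ Real.exp (distortionRate lam Astar) *
      dC1 S T * (_root_.transfer S u x + _root_.transfer T u x) := by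
  have hlam0 : 0 < lam := by linarith
  have hδ := dC1_nonneg S T
  have hS : 0 ≤ _root_.transfer S u x := transfer_nonneg hlam0 S hu.nonneg x
  have hT : 0 ≤ _root_.transfer T u x := transfer_nonneg hlam0 T hu.nonneg x
  rcases lt_or_ge (dC1 S T) 1 with h | h
  · have hexp := exp_mul_sub_one_le (κ := distortionRate lam Astar) hδ h.le
    have hST := hu.transfer_le_exp_mul_transfer hlam h x
    have hTS := hu.transfer_le_exp_mul_transfer hlam (dC1_comm S T ▸ h) x
    rw [dC1_comm T S] at hTS
    have hS' := mul_le_mul_of_nonneg_right hexp hS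
    have hT' := mul_le_mul_of_nonneg_right hexp hT
    have hE : 0 ≤ Real.exp (distortionRate lam Astar) * dC1 S T := by positivity
    have hES := mul_nonneg hE hS
    have hET := mul_nonneg hE hT
    exact abs_le.2 ⟨by linarith, by linarith⟩
  · have hE : 1 ≤ Real.exp (distortionRate lam Astar) * dC1 S T := one_le_mul_of_one_le_of_one_le
      (Real.one_le_exp (distortionRate_nonneg hlam S.secondBound_nonneg)) h
    have hsum := le_mul_of_one_le_left (add_nonneg hS hT) hE
    exact abs_le.2 ⟨by linarith, by linarith⟩

theorem l1norm_transfer_sub_transfer_le (hlam : 1 < lam) (S T : CM lam Astar) {u : Circle1 → ℝ}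
    (hu : LogLipschitz (coneAperture lam Astar) u) :
    l1norm (transfer S u - transfer T u) ≤
      2 * Real.exp (distortionRate lam Astar) * dC1 S T * ∫ x, u x := by
  have hlam0 : 0 < lam := by linarith
  have hS := integrable_transfer hlam0 S hu.integrable
  have hT := integrable_transfer hlam0 T hu.integrable
  refine (integral_mono (hS.sub hT).abs ((hS.add hT).const_mul _)
    (hu.abs_transfer_sub_transfer_le hlam S T)).trans_eq ?_
  rw [integral_const_mul, integral_add' hS hT, integral_transfer hlam0 S hu.integrable,
    integral_transfer hlam0 T hu.integrable]
  ring

theorem l1norm_transferIter_sub_transferIter_const_le (hlam : 1 < lam) (Ts : ℕ → CM lam Astar)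
    (T : CM lam Astar) {δ : ℝ} {m : ℕ} (hδ : ∀ i < m, dC1 (Ts (i + 1)) T ≤ δ) {u : Circle1 → ℝ}
    (hu : LogLipschitz (coneAperture lam Astar) u) :
    l1norm (transferIter Ts m u - transferIter (fun _ => T) m u) ≤
      m * (2 * Real.exp (distortionRate lam Astar) * δ * ∫ x, u x) := by
  have hlam0 : 0 < lam := by linarith
  have hint (Rs : ℕ → CM lam Astar) (k : ℕ) := integrable_transferIter hlam0 Rs k hu.integrable
  induction m with
  | zero => simp [transferIter, l1norm]
  | succ m ih =>
    have hm := hu.transferIter hlam Ts m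
    have hlast : l1norm (transfer (Ts (m + 1)) (transferIter Ts m u) -
        transfer T (transferIter Ts m u)) ≤
          2 * Real.exp (distortionRate lam Astar) * δ * ∫ x, u x := by
      refine (l1norm_transfer_sub_transfer_le hlam (Ts (m + 1)) T hm).trans ?_
      rw [integral_transferIter hlam0 Ts m hu.integrable]
      have := hδ m (Nat.lt_succ_self m)
      have : 0 ≤ ∫ x, u x := integral_nonneg fun x => hu.nonneg x
      gcongr
    have hprev : l1norm (transfer T (transferIter Ts m u) -
        transfer T (transferIter (fun _ => T) m u)) ≤
          m * (2 * Real.exp (distortionRate lam Astar) * δ * ∫ x, u x) := by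
      rw [← transfer_sub hlam0]
      exact (l1norm_transfer_le hlam0 T ((hint Ts m).sub (hint _ m))).trans
        (ih fun i hi => hδ i (hi.trans (Nat.lt_succ_self m)))
    refine (l1norm_sub_le (hint Ts (m + 1)) (integrable_transfer hlam0 T (hint Ts m))
      (hint (fun _ => T) (m + 1))).trans ((add_le_add hlast hprev).trans_eq ?_)
    push_cast
    ring

end Perturbation

/-! ### Densities that are Lipschitz on an arc -/

theorem abs_mul_cutoff_sub_le {X : Type*} [PseudoMetricSpace X] {f : X → ℝ} {z : X} {L B ε : ℝ}
    (hL : 0 ≤ L) (hB : 0 ≤ B) (hε : 0 < ε) (hf : ∀ x, x ≠ z → |f x| ≤ B)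
    (hfL : ∀ x y, x ≠ z → y ≠ z →
      |f x - f y| ≤ L * dist x y ∨ dist x z + dist y z ≤ dist x y) (x y : X) :
    |f x * min 1 (dist x z / ε) - f y * min 1 (dist y z / ε)| ≤ (L + B / ε) * dist x y := by
  set χ : X → ℝ := fun x => min 1 (dist x z / ε)
  have hχ0 (x : X) : 0 ≤ χ x := le_min zero_le_one (by positivity)
  have hχ1 (x : X) : χ x ≤ 1 := min_le_left _ _
  have hχz (x : X) : |f x * χ x| ≤ B / ε * dist x z := by
    rcases eq_or_ne x z with rfl | hx
    · simp [χ]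
    · rw [abs_mul, abs_of_nonneg (hχ0 x), div_mul_eq_mul_div, mul_div_assoc]
      exact mul_le_mul (hf x hx) (min_le_right _ _) (hχ0 x) hB
  have hfar (h : dist x z + dist y z ≤ dist x y) :
      |f x * χ x - f y * χ y| ≤ (L + B / ε) * dist x y :=
    calc |f x * χ x - f y * χ y| ≤ |f x * χ x| + |f y * χ y| := abs_sub _ _
      _ ≤ B / ε * (dist x z + dist y z) := by linarith [hχz x, hχz y]
      _ ≤ (L + B / ε) * dist x y := by gcongr; linarith
  rcases eq_or_ne x z with rfl | hx
  · exact hfar (by rw [dist_self, zero_add, dist_comm])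
  rcases eq_or_ne y z with rfl | hy
  · exact hfar (by rw [dist_self, add_zero])
  refine (hfL x y hx hy).elim (fun h => ?_) hfar
  have hχ : |χ x - χ y| ≤ dist x y / ε :=
    calc |χ x - χ y| ≤ |dist x z / ε - dist y z / ε| := by
          simpa [χ] using abs_min_sub_min_le_max 1 (dist x z / ε) 1 (dist y z / ε)
      _ ≤ dist x y / ε := by
          rw [← sub_div, abs_div, abs_of_pos hε]
          gcongr
          exact abs_dist_sub_le x y z
  calc |f x * χ x - f y * χ y| = |(f x - f y) * χ x + f y * (χ x - χ y)| := by ring_nf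
    _ ≤ |f x - f y| * χ x + |f y| * |χ x - χ y| :=
        (abs_add_le _ _).trans_eq (by rw [abs_mul, abs_mul, abs_of_nonneg (hχ0 x)])
    _ ≤ L * dist x y * 1 + B * (dist x y / ε) := by
        have := hf y hy
        have := hχ1 x
        gcongr
    _ = (L + B / ε) * dist x y := by ring

section Arc

theorem arcCoord_mem_Ioc (z x : Circle1) : arcCoord z x ∈ Ioc (zrep z) (zrep z + 1) :=
  (AddCircle.equivIoc 1 (zrep z) x).2

theorem arcDist_le_one (z x y : Circle1) : arcDist z x y ≤ 1 := by
  have hx := arcCoord_mem_Ioc z x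
  have hy := arcCoord_mem_Ioc z y
  rw [arcDist, abs_le]
  constructor <;> linarith [hx.1, hx.2, hy.1, hy.2]

/-- If `x` and `y` are closer to each other than along the arc `J_z`, then a shortest path between
them passes through `z`. -/
theorem arcDist_le_dist_or (z x y : Circle1) :
    arcDist z x y ≤ dist x y ∨ dist x z + dist y z ≤ dist x y := by
  wlog hxy : arcCoord z x ≤ arcCoord z y generalizing x y
  · rw [arcDist, abs_sub_comm, ← arcDist, dist_comm, add_comm]
    exact this y x (le_of_not_ge hxy)
  have hx := arcCoord_mem_Ioc z x
  have hy := arcCoord_mem_Ioc z y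
  have hcx : (arcCoord z x : Circle1) = x := AddCircle.coe_equivIoc
  have hcy : (arcCoord z y : Circle1) = y := AddCircle.coe_equivIoc
  have hcz : (zrep z : Circle1) = z := AddCircle.coe_equivIco
  have hcz' : ((zrep z + 1 : ℝ) : Circle1) = z := by
    simpa only [Int.cast_one, hcz] using coe_add_int (zrep z) 1
  have hd : Int.fract (arcCoord z y - arcCoord z x) = arcCoord z y - arcCoord z x :=
    Int.fract_eq_self.2 ⟨sub_nonneg.2 hxy, by linarith [hx.1, hy.2]⟩
  have hdist : dist x y =
      min (arcCoord z y - arcCoord z x) (1 - (arcCoord z y - arcCoord z x)) := by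
    rw [← hd, ← abs_sub_round_eq_min, ← UnitAddCircle.norm_eq, AddCircle.coe_sub, hcx, hcy,
      dist_comm, dist_eq_norm]
  rw [hdist, arcDist, abs_sub_comm, abs_of_nonneg (sub_nonneg.2 hxy)]
  refine (min_choice _ _).imp (fun h => h.ge) fun h => ?_
  have hxz : dist x z ≤ arcCoord z x - zrep z := by
    have h := dist_coe_le_abs_sub (arcCoord z x) (zrep z)
    rwa [hcx, hcz, abs_of_pos (sub_pos.2 hx.1)] at h
  have hyz : dist y z ≤ zrep z + 1 - arcCoord z y := by
    have h := dist_coe_le_abs_sub (zrep z + 1) (arcCoord z y)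
    rwa [hcy, hcz', abs_of_nonneg (sub_nonneg.2 hy.2), dist_comm] at h
  rw [h]
  linarith

theorem ae_ne (z : Circle1) : ∀ᵐ x : Circle1, x ≠ z := by
  have h : volume (Metric.closedBall z 0) = 0 := by
    rw [AddCircle.volume_closedBall]
    simp
  rwa [Metric.closedBall_zero, ← compl_mem_ae_iff] at h

end Arc

section InitialDensity

variable {L : ℝ} {ρ : Circle1 → ℝ} {z : Circle1}

theorem abs_le_one_add_of_lipOnArc (hL : 0 ≤ L) (hρ : IsProbDensity ρ) (hz : LipOnArc z L ρ)
    {x : Circle1} (hx : x ≠ z) : |ρ x| ≤ 1 + L := by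
  have hmean : ∫ _ : Circle1, (ρ x - L) ≤ ∫ y, ρ y := by
    refine integral_mono_ae (integrable_const _) hρ.1 ((ae_ne z).mono fun y hy => ?_)
    have hdist : L * arcDist z x y ≤ L := mul_le_of_le_one_right hL (arcDist_le_one z x y)
    linarith [(abs_le.1 (hz x y hx hy)).2]
  rw [integral_const, probReal_univ, one_smul, hρ.2.1] at hmean
  rw [abs_of_nonneg (hρ.2.2 x)]
  linarith

theorem exists_lipschitzWith_l1norm_sub_le (hL : 0 ≤ L) (hρ : IsProbDensity ρ)
    (hz : LipOnArc z L ρ) {ε : ℝ} (hε : 0 < ε) :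
    ∃ (K : NNReal) (v : Circle1 → ℝ), K = L + (1 + L) / ε ∧ LipschitzWith K v ∧
      l1norm (ρ - v) ≤ (1 + L) * (2 * ε) := by
  have hK : 0 ≤ L + (1 + L) / ε := by positivity
  have hbound (x : Circle1) (hx : x ≠ z) := abs_le_one_add_of_lipOnArc hL hρ hz hx
  set v : Circle1 → ℝ := fun x => ρ x * min 1 (dist x z / ε)
  have hv : LipschitzWith ⟨_, hK⟩ v := .of_dist_le_mul <|
    abs_mul_cutoff_sub_le hL (by positivity) hε hbound fun x y hx hy =>
      (arcDist_le_dist_or z x y).imp_left fun h => (hz x y hx hy).trans (by gcongr)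
  have hvint : Integrable v := hv.continuous.integrable_of_hasCompactSupport (.of_compactSpace _)
  refine ⟨⟨_, hK⟩, v, rfl, hv, ?_⟩
  have hball : MeasurableSet (Metric.closedBall z ε) := measurableSet_closedBall
  have hcutoff : ∀ᵐ x, |(ρ - v) x| ≤ (Metric.closedBall z ε).indicator (fun _ => 1 + L) x := by
    filter_upwards [ae_ne z] with x hx
    have hsub : (ρ - v) x = ρ x * (1 - min 1 (dist x z / ε)) := by
      simp only [v, Pi.sub_apply]
      ring
    by_cases hxball : dist x z ≤ ε
    · rw [indicator_of_mem (Metric.mem_closedBall.2 hxball), hsub, abs_mul,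
        abs_of_nonneg (sub_nonneg.2 (min_le_left _ _))]
      refine (mul_le_of_le_one_right (abs_nonneg _) (sub_le_self _ ?_)).trans (hbound x hx)
      positivity
    · rw [hsub, min_eq_left ((one_le_div hε).2 (not_le.1 hxball).le), sub_self, mul_zero, abs_zero]
      exact indicator_nonneg (fun _ _ => by positivity) x
  calc l1norm (ρ - v) ≤ ∫ x, (Metric.closedBall z ε).indicator (fun _ => 1 + L) x :=
        integral_mono_ae (hρ.1.sub hvint).abs ((integrable_const _).indicator hball) hcutoff
    _ = (1 + L) * min 1 (2 * ε) := by
      rw [integral_indicator_const _ hball, smul_eq_mul, measureReal_def,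
        AddCircle.volume_closedBall, ENNReal.toReal_ofReal (by positivity), mul_comm]
    _ ≤ (1 + L) * (2 * ε) := by gcongr; exact min_le_right _ _

theorem l1norm_transferIter_sub_one_le (hlam : 1 < lam) (Ts : ℕ → CM lam Astar) (hL : 0 ≤ L)
    (hρ : IsProbDensity ρ) (hz : LipOnArc z L ρ) {ε : ℝ} (hε0 : 0 < ε) (hε1 : ε ≤ 1) (k : ℕ) :
    l1norm (transferIter Ts k (ρ - 1)) ≤
      8 * (1 + L) * (ε + contractionRate lam Astar ^ k / ε) := by
  obtain ⟨K, v, hK, hv, hρv⟩ := exists_lipschitzWith_l1norm_sub_le hL hρ hz hε0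
  have hθ := contractionRate_mem_Ioo hlam (Ts 0).secondBound_nonneg
  have hv1 : LipschitzWith K (v - 1) :=
    .of_dist_le_mul fun x y => by simpa using hv.dist_le_mul x y
  have hone : Integrable (1 : Circle1 → ℝ) := integrable_const 1
  have hmean : ∫ x, (ρ - 1) x = 0 := by
    rw [integral_sub' hρ.1 hone, hρ.2.1]
    simp
  have h := l1norm_transferIter_le_of_lipschitzWith_approx hlam Ts (hρ.1.sub hone) hmean hv1 k
  rw [sub_sub_sub_cancel_right, hK] at h
  have hcoef : L + (1 + L) / ε ≤ 2 * (1 + L) / ε := by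
    rw [le_div_iff₀ hε0, add_mul, div_mul_cancel₀ _ hε0.ne']
    nlinarith
  calc l1norm (transferIter Ts k (ρ - 1))
      ≤ 2 * ((1 + L) * (2 * ε)) + 4 * (2 * (1 + L) / ε) * contractionRate lam Astar ^ k := by
        refine h.trans (add_le_add (by gcongr) ?_)
        have := pow_pos hθ.1 k
        gcongr
    _ ≤ 8 * (1 + L) * (ε + contractionRate lam Astar ^ k / ε) := by
        have : 0 ≤ (1 + L) * ε := by positivity
        linarith [show 4 * (2 * (1 + L) / ε) * contractionRate lam Astar ^ k =
          8 * (1 + L) * (contractionRate lam Astar ^ k / ε) by ring]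

theorem l1norm_transferIter_add_sub_le (hlam : 1 < lam) (Ts : ℕ → CM lam Astar) {T : CM lam Astar}
    {r : Circle1 → ℝ} (hr : IsSRBDensity T r) (hL : 0 ≤ L) (hρ : IsProbDensity ρ)
    (hz : LipOnArc z L ρ) {ε : ℝ} (hε0 : 0 < ε) (hε1 : ε ≤ 1) {δ : ℝ} {j m : ℕ}
    (hδ : ∀ i < m, dC1 (Ts (j + (i + 1))) T ≤ δ) :
    l1norm (transferIter Ts (j + m) ρ - r) ≤
      8 * (1 + L) * (ε + contractionRate lam Astar ^ (j + m) / ε) +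
        m * (2 * Real.exp (distortionRate lam Astar) * δ) +
        2 * contractionRate lam Astar ^ m := by
  have hlam0 : 0 < lam := by linarith
  have ha := one_lt_coneAperture hlam T.secondBound_nonneg
  have hone : LogLipschitz (coneAperture lam Astar) (1 : Circle1 → ℝ) :=
    .const (by linarith) zero_le_one
  have hu := hone.transferIter hlam Ts j
  have hu1 : ∫ x, transferIter Ts j 1 x = 1 := by
    rw [integral_transferIter hlam0 Ts j hone.integrable]
    simp
  have hforget := l1norm_transferIter_sub_one_le hlam Ts hL hρ hz hε0 hε1 (j + m)
  have hfreeze := l1norm_transferIter_sub_transferIter_const_le hlam (fun i => Ts (j + i)) T hδ hu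
  have hmix := l1norm_transferIter_sub_le_of_isSRBDensity hlam hr hu hu1 m
  rw [transferIter_sub hlam0] at hforget
  rw [← transferIter_add, hu1, mul_one] at hfreeze
  have hint (R : ℕ → CM lam Astar) (i : ℕ) {h : Circle1 → ℝ} (hh : Integrable h) :=
    integrable_transferIter hlam0 R i hh
  have htri := l1norm_sub_le (hint Ts (j + m) hρ.1) (hint Ts (j + m) hone.integrable) hr.1.1
  have htri' := l1norm_sub_le (hint Ts (j + m) hone.integrable)
    (hint (fun _ => T) m hu.integrable) hr.1.1
  linarith

end InitialDensity

/-! ### Choice of the time scales -/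

section RealEstimates

theorem max_rpow_le_add {a b : ℝ} (ha : 0 ≤ a) (hb : 0 ≤ b) (c : ℝ) :
    max a b ^ c ≤ a ^ c + b ^ c := by
  have ha' := Real.rpow_nonneg ha c
  have hb' := Real.rpow_nonneg hb c
  rcases max_choice a b with h | h <;> rw [h] <;> linarith

theorem exists_one_sub_log_rpow_mul_rpow_le {p a b : ℝ} (hp : 0 < p) (hab : b < a) :
    ∃ C : ℝ, 0 < C ∧ ∀ x ∈ Ioc (0 : ℝ) 1, (1 - Real.log x) ^ p * x ^ a ≤ C * x ^ b := by
  set β := (a - b) / p with hβ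
  have hβ0 : 0 < β := div_pos (sub_pos.2 hab) hp
  refine ⟨(1 + 1 / β) ^ p, by positivity, fun x hx => ?_⟩
  have hlog : 1 - Real.log x ≤ (1 + 1 / β) * x ^ (-β) := by
    have hpow : 1 ≤ x ^ (-β) := Real.one_le_rpow_of_pos_of_le_one_of_nonpos hx.1 hx.2 (by linarith)
    have hinv := Real.log_le_rpow_div (inv_nonneg.2 hx.1.le) hβ0
    rw [Real.log_inv, Real.inv_rpow hx.1.le, ← Real.rpow_neg hx.1.le] at hinv
    linarith [show (1 + 1 / β) * x ^ (-β) = x ^ (-β) + x ^ (-β) / β by ring]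
  have hlog0 : 0 ≤ 1 - Real.log x := by linarith [Real.log_nonpos hx.1.le hx.2]
  have hexp : -β * p + a = b := by
    rw [hβ]
    field_simp
    ring
  calc (1 - Real.log x) ^ p * x ^ a ≤ ((1 + 1 / β) * x ^ (-β)) ^ p * x ^ a := by
        have := hx.1.le
        gcongr
    _ = (1 + 1 / β) ^ p * x ^ b := by
        rw [Real.mul_rpow (by positivity) (Real.rpow_nonneg hx.1.le _), ← Real.rpow_mul hx.1.le,
          mul_assoc, ← Real.rpow_add hx.1, hexp]

theorem abs_div_sub_le_of_floor_lt {n i m : ℕ} {t s e : ℝ} (hn : 1 ≤ n) (ht : 0 ≤ t)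
    (hi : i ≤ ⌊n * t⌋₊) (him : ⌊n * t⌋₊ < i + m) (hne : (n : ℝ)⁻¹ ≤ e) (hts : |t - s| ≤ e) :
    |(i : ℝ) / n - s| ≤ (m + 1) * e := by
  have hn0 : (0 : ℝ) < n := by exact_mod_cast hn
  have hi' : (i : ℝ) ≤ n * t := (Nat.le_floor_iff (by positivity)).1 hi
  have him' : n * t < i + m := by exact_mod_cast (Nat.floor_lt (by positivity)).1 him
  have hit : |(i : ℝ) / n - t| ≤ m * (n : ℝ)⁻¹ := by
    rw [abs_sub_comm, abs_of_nonneg (by rw [sub_nonneg, div_le_iff₀ hn0]; linarith),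
      ← div_eq_mul_inv, le_div_iff₀ hn0, sub_mul, div_mul_cancel₀ _ hn0.ne']
    linarith
  calc |(i : ℝ) / n - s| ≤ |(i : ℝ) / n - t| + |t - s| := abs_sub_le _ _ _
    _ ≤ m * e + e := add_le_add (hit.trans (by gcongr)) hts
    _ = (m + 1) * e := by ring

end RealEstimates

variable {η : ℝ} {γ : ℝ → CM lam Astar} {Tarr : ℕ → ℕ → CM lam Astar}

theorem exists_dC1_curve_le (hη : 0 < η) (hγ : HolderCurve η γ) (hT : ArrayApprox η γ Tarr) :
    ∃ K : ℝ, 0 ≤ K ∧ ∀ {n i m : ℕ} {t s e : ℝ}, 1 ≤ n → t ∈ Icc 0 1 → s ∈ Icc 0 1 →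
      i ≤ ⌊n * t⌋₊ → ⌊n * t⌋₊ < i + m → (n : ℝ)⁻¹ ≤ e → |t - s| ≤ e →
      dC1 (Tarr n i) (γ s) ≤ K * ((m + 1 : ℝ) ^ η * e ^ η) := by
  obtain ⟨H, hH⟩ := hγ
  obtain ⟨M, hM⟩ := hT
  refine ⟨|M| + |H|, by positivity, fun {n i m t s e} hn ht hs hi him hne hts => ?_⟩
  have hn0 : (0 : ℝ) < n := by exact_mod_cast hn
  have he0 : 0 < e := (inv_pos.2 hn0).trans_le hne
  have hin : (n : ℝ) * (i / n) = i := mul_div_cancel₀ _ hn0.ne'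
  have hi1 : (i : ℝ) / n ∈ Icc (0 : ℝ) 1 := by
    refine ⟨by positivity, (div_le_iff₀ hn0).2 ?_⟩
    have := (Nat.le_floor_iff (mul_nonneg hn0.le ht.1)).1 hi
    nlinarith [ht.2]
  have harray : dC1 (Tarr n i) (γ (i / n)) ≤ |M| * ((m + 1 : ℝ) ^ η * e ^ η) := by
    have h := hM n hn _ hi1
    rw [hin, Nat.floor_natCast, mul_comm, ← le_div_iff₀ (by positivity), div_eq_mul_inv M,
      ← Real.inv_rpow hn0.le] at h
    calc dC1 (Tarr n i) (γ (i / n)) ≤ M * (n : ℝ)⁻¹ ^ η := h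
      _ ≤ |M| * (1 * e ^ η) := by
          rw [one_mul]
          gcongr
          exact le_abs_self M
      _ ≤ |M| * ((m + 1 : ℝ) ^ η * e ^ η) := by
          gcongr
          exact Real.one_le_rpow (by linarith [m.cast_nonneg (α := ℝ)]) hη.le
  have hcurve : dC1 (γ (i / n)) (γ s) ≤ |H| * ((m + 1 : ℝ) ^ η * e ^ η) :=
    calc dC1 (γ (i / n)) (γ s) ≤ H * |(i : ℝ) / n - s| ^ η := hH _ hi1 s hs
      _ ≤ |H| * ((m + 1) * e) ^ η := by
          gcongr
          · exact le_abs_self H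
          · exact abs_div_sub_le_of_floor_lt hn ht.1 hi him hne hts
      _ = |H| * ((m + 1 : ℝ) ^ η * e ^ η) := by rw [Real.mul_rpow (by positivity) he0.le]
  linarith [dC1_triangle (Tarr n i) (γ (i / n)) (γ s)]

/-- The number of steps after which the contraction rate has been compounded to `x ^ (-c)`. -/
noncomputable def couplingTime (lam Astar c x : ℝ) : ℕ :=
  ⌊c * Real.log x / -Real.log (contractionRate lam Astar)⌋₊

theorem contractionRate_pow_couplingTime_le (hlam : 1 < lam) (hA : 0 ≤ Astar) (c : ℝ) {x : ℝ}
    (hx : 0 < x) :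
    contractionRate lam Astar ^ couplingTime lam Astar c x ≤
      (contractionRate lam Astar)⁻¹ * x ^ (-c) := by
  have hθ := contractionRate_mem_Ioo hlam hA
  unfold couplingTime
  set θ := contractionRate lam Astar
  have hlog := (Real.log_neg hθ.1 hθ.2).ne
  calc θ ^ ⌊c * Real.log x / -Real.log θ⌋₊
      ≤ θ ^ (-1 + c * Real.log x / -Real.log θ) := by
        rw [← Real.rpow_natCast]
        exact Real.rpow_le_rpow_of_exponent_ge hθ.1 hθ.2.le
          (by linarith [Nat.lt_floor_add_one (c * Real.log x / -Real.log θ)])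
    _ = θ⁻¹ * x ^ (-c) := by
        rw [Real.rpow_add hθ.1, Real.rpow_neg_one, Real.rpow_def_of_pos hθ.1,
          Real.rpow_def_of_pos hx]
        field_simp

theorem neg_log_contractionRate_pos (hlam : 1 < lam) (hA : 0 ≤ Astar) :
    0 < -Real.log (contractionRate lam Astar) :=
  have hθ := contractionRate_mem_Ioo hlam hA
  neg_pos.2 (Real.log_neg hθ.1 hθ.2)

theorem couplingTime_mono (hlam : 1 < lam) (hA : 0 ≤ Astar) {c c' x x' : ℝ} (hc : 0 ≤ c)
    (hcc' : c ≤ c') (hx : 1 ≤ x) (hxx' : x ≤ x') :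
    couplingTime lam Astar c x ≤ couplingTime lam Astar c' x' := by
  have hτ := neg_log_contractionRate_pos hlam hA
  have hlog := Real.log_nonneg hx
  have := hc.trans hcc'
  unfold couplingTime
  gcongr

theorem couplingTime_add_one_le (hlam : 1 < lam) (hA : 0 ≤ Astar) {c x : ℝ} (hc : 0 ≤ c)
    (hx : 1 ≤ x) :
    (couplingTime lam Astar c x + 1 : ℝ) ≤
      (c / -Real.log (contractionRate lam Astar) + 1) * (1 + Real.log x) := by
  have hτ := neg_log_contractionRate_pos hlam hA
  have hlog := Real.log_nonneg hx
  have hfloor : (couplingTime lam Astar c x : ℝ) ≤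
      c / -Real.log (contractionRate lam Astar) * Real.log x :=
    (Nat.floor_le (by positivity)).trans_eq (mul_div_right_comm _ _ _)
  have : 0 ≤ c / -Real.log (contractionRate lam Astar) := by positivity
  linarith

/-- The constant `b` of the theorem: after `b log n` steps, the memory of a density which has been
regularised at scale `n ^ (-η)` has decayed to `n ^ (-η)`. -/
noncomputable def burnInConstant (lam Astar η : ℝ) : ℝ :=
  2 * η / -Real.log (contractionRate lam Astar)

theorem burnInConstant_pos (hlam : 1 < lam) (hA : 0 ≤ Astar) (hη : 0 < η) :
    0 < burnInConstant lam Astar η :=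
  div_pos (by positivity) (neg_log_contractionRate_pos hlam hA)

theorem couplingTime_le_floor_mul {n : ℕ} {t : ℝ} (hn : 1 ≤ n)
    (ht : burnInConstant lam Astar η * Real.log n / n ≤ t) :
    couplingTime lam Astar (2 * η) n ≤ ⌊n * t⌋₊ := by
  have hn0 : (0 : ℝ) < n := by exact_mod_cast hn
  rw [div_le_iff₀ hn0, burnInConstant, div_mul_eq_mul_div] at ht
  exact Nat.floor_mono (ht.trans_eq (mul_comm t n))

theorem contractionRate_pow_floor_div_le (hlam : 1 < lam) (hA : 0 ≤ Astar) {n : ℕ} {t : ℝ}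
    (hn : 1 ≤ n) (ht : burnInConstant lam Astar η * Real.log n / n ≤ t) :
    contractionRate lam Astar ^ ⌊n * t⌋₊ / (n : ℝ) ^ (-η) ≤
      (contractionRate lam Astar)⁻¹ * (n : ℝ) ^ (-η) := by
  have hθ := contractionRate_mem_Ioo hlam hA
  have hn0 : (0 : ℝ) < n := by exact_mod_cast hn
  rw [div_le_iff₀ (by positivity), mul_assoc, ← Real.rpow_add hn0, ← neg_add, ← two_mul]
  exact (pow_le_pow_of_le_one hθ.1.le hθ.2.le (couplingTime_le_floor_mul hn ht)).trans
    (contractionRate_pow_couplingTime_le hlam hA (2 * η) hn0)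

theorem l1norm_transferIter_sub_le_of_couplingTime (hlam : 1 < lam) (hη : 0 < η)
    (Ts : ℕ → CM lam Astar) {T : CM lam Astar} {r : Circle1 → ℝ} (hr : IsSRBDensity T r)
    {L : ℝ} (hL : 0 ≤ L) {ρ : Circle1 → ℝ} (hρ : IsProbDensity ρ) {z : Circle1}
    (hz : LipOnArc z L ρ) {n : ℕ} {t e δ : ℝ} (hn : 1 ≤ n)
    (hnt : burnInConstant lam Astar η * Real.log n / n ≤ t) (hne : (n : ℝ)⁻¹ ≤ e) (he1 : e ≤ 1)
    (hδ : ∀ i ≤ ⌊n * t⌋₊, ⌊n * t⌋₊ < i + couplingTime lam Astar η e⁻¹ → dC1 (Ts i) T ≤ δ) :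
    l1norm (transferIter Ts ⌊n * t⌋₊ ρ - r) ≤
      (8 * (1 + L) * (1 + (contractionRate lam Astar)⁻¹) + 2 * (contractionRate lam Astar)⁻¹) *
          e ^ η +
        couplingTime lam Astar η e⁻¹ * (2 * Real.exp (distortionRate lam Astar) * δ) := by
  have hA := T.secondBound_nonneg
  have hθ := contractionRate_mem_Ioo hlam hA
  have hn0 : (0 : ℝ) < n := by exact_mod_cast hn
  have hn1 : (1 : ℝ) ≤ n := by exact_mod_cast hn
  have he0 : 0 < e := (inv_pos.2 hn0).trans_le hne
  have hforget := contractionRate_pow_floor_div_le hlam hA hn hnt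
  have hmix := contractionRate_pow_couplingTime_le hlam hA η (inv_pos.2 he0)
  rw [Real.inv_rpow he0.le, Real.rpow_neg he0.le, inv_inv] at hmix
  have hscale : (n : ℝ) ^ (-η) ≤ e ^ η := by
    rw [Real.rpow_neg hn0.le, ← Real.inv_rpow hn0.le]
    gcongr
  have hmk : couplingTime lam Astar η e⁻¹ ≤ ⌊n * t⌋₊ :=
    (couplingTime_mono hlam hA hη.le (by linarith) (one_le_inv₀ he0 |>.2 he1)
      (inv_le_of_inv_le₀ hn0 hne)).trans (couplingTime_le_floor_mul hn hnt)
  obtain ⟨j, hj⟩ := Nat.exists_eq_add_of_le' hmk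
  have hmain := l1norm_transferIter_add_sub_le hlam Ts hr hL hρ hz (ε := (n : ℝ) ^ (-η))
    (by positivity) (Real.rpow_le_one_of_one_le_of_nonpos hn1 (by linarith)) (j := j)
    (m := couplingTime lam Astar η e⁻¹) fun i hi => hδ _ (by omega) (by omega)
  rw [← hj] at hmain
  set θ := contractionRate lam Astar
  have hforget' : 8 * (1 + L) * ((n : ℝ) ^ (-η) + θ ^ ⌊n * t⌋₊ / (n : ℝ) ^ (-η)) ≤
      8 * (1 + L) * ((1 + θ⁻¹) * e ^ η) := by
    have hθ0 := hθ.1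
    gcongr
    calc (n : ℝ) ^ (-η) + θ ^ ⌊n * t⌋₊ / (n : ℝ) ^ (-η) ≤ (1 + θ⁻¹) * (n : ℝ) ^ (-η) := by linarith
      _ ≤ (1 + θ⁻¹) * e ^ η := by gcongr
  linarith

theorem exists_l1norm_transferIter_sub_le (hlam : 1 < lam) (hη : 0 < η) (hγ : HolderCurve η γ)
    (hT : ArrayApprox η γ Tarr) {L : ℝ} (hL : 0 ≤ L) :
    ∃ C : ℝ, 0 < C ∧ ∀ {ρ : Circle1 → ℝ} {z : Circle1}, IsProbDensity ρ → LipOnArc z L ρ →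
      ∀ {n : ℕ} {t s e : ℝ}, 1 ≤ n → t ∈ Icc 0 1 → s ∈ Icc 0 1 →
      burnInConstant lam Astar η * Real.log n / n ≤ t →
      (n : ℝ)⁻¹ ≤ e → |t - s| ≤ e → e ≤ 1 → ∀ {r : Circle1 → ℝ}, IsSRBDensity (γ s) r →
      l1norm (transferIter (Tarr n) ⌊n * t⌋₊ ρ - r) ≤
        C * ((1 - Real.log e) ^ (1 + η) * e ^ η) := by
  have hA := (γ 0).secondBound_nonneg
  have hθ0 := inv_pos.2 (contractionRate_mem_Ioo hlam hA).1
  obtain ⟨K, hK0, hK⟩ := exists_dC1_curve_le hη hγ hT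
  set A := 8 * (1 + L) * (1 + (contractionRate lam Astar)⁻¹) + 2 * (contractionRate lam Astar)⁻¹
  set D := 2 * Real.exp (distortionRate lam Astar)
  set a := η / -Real.log (contractionRate lam Astar)
  have : 0 < A := by positivity
  have : 0 < D := by positivity
  have ha0 : 0 < a := div_pos hη (neg_log_contractionRate_pos hlam hA)
  refine ⟨A + D * K * (a + 1) ^ (1 + η), by positivity,
    fun {ρ z} hρ hz {n t s e} hn ht hs hnt hne hts he1 {r} hr => ?_⟩
  have he0 : 0 < e := (inv_pos.2 (by exact_mod_cast hn)).trans_le hne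
  have hΛ : 1 ≤ 1 - Real.log e := by linarith [Real.log_nonpos he0.le he1]
  have hm := couplingTime_add_one_le hlam hA hη.le ((one_le_inv₀ he0).2 he1)
  rw [Real.log_inv, ← sub_eq_add_neg] at hm
  have h := l1norm_transferIter_sub_le_of_couplingTime hlam hη (Tarr n) hr hL hρ hz hn hnt hne he1
    fun i hi him => hK hn ht hs hi him hne hts
  set m := couplingTime lam Astar η e⁻¹
  set Λ := 1 - Real.log e
  have hstat : A * e ^ η ≤ A * (Λ ^ (1 + η) * e ^ η) := by
    gcongr
    exact le_mul_of_one_le_left (by positivity) (Real.one_le_rpow hΛ (by linarith))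
  have hdrift : m * (D * (K * ((m + 1 : ℝ) ^ η * e ^ η))) ≤
      D * K * (a + 1) ^ (1 + η) * (Λ ^ (1 + η) * e ^ η) :=
    calc m * (D * (K * ((m + 1 : ℝ) ^ η * e ^ η)))
        = D * K * (m * (m + 1 : ℝ) ^ η * e ^ η) := by ring
      _ ≤ D * K * ((m + 1 : ℝ) ^ (1 + η) * e ^ η) := by
          rw [Real.rpow_add (by positivity), Real.rpow_one]
          gcongr
          linarith
      _ ≤ D * K * (((a + 1) * Λ) ^ (1 + η) * e ^ η) := by gcongr
      _ = D * K * (a + 1) ^ (1 + η) * (Λ ^ (1 + η) * e ^ η) := by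
          rw [Real.mul_rpow (by positivity) (by positivity)]
          ring
  linarith

end QDS

theorem statement8_general {lam Astar : ℝ} (hlam : 1 < lam) {η : ℝ} (hη : 0 < η)
    (γ : ℝ → CM lam Astar) (hγ : HolderCurve η γ)
    (Tarr : ℕ → ℕ → CM lam Astar) (hT : ArrayApprox η γ Tarr) :
    ∃ b : ℝ, 0 < b ∧
      ∀ η' : ℝ, η' < η → ∀ L : ℝ, 0 ≤ L → ∃ C : ℝ, 0 < C ∧
        ∀ (ρ : Circle1 → ℝ) (z : Circle1), IsProbDensity ρ → LipOnArc z L ρ →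
          ∀ n : ℕ, 1 ≤ n → ∀ t ∈ Icc (0 : ℝ) 1, b * Real.log n / n ≤ t →
            (∀ r : Circle1 → ℝ, IsSRBDensity (γ t) r →
              l1norm (fun x => arrTransfer Tarr n ⌊(n : ℝ) * t⌋₊ ρ x - r x) ≤
                C * (n : ℝ) ^ (-η')) ∧
            (∀ s ∈ Icc (0 : ℝ) 1, ∀ r : Circle1 → ℝ, IsSRBDensity (γ s) r →
              l1norm (fun x => arrTransfer Tarr n ⌊(n : ℝ) * t⌋₊ ρ x - r x) ≤
                C * ((n : ℝ) ^ (-η') + |t - s| ^ η')) := by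
  refine ⟨QDS.burnInConstant lam Astar η,
    QDS.burnInConstant_pos hlam (γ 0).secondBound_nonneg hη, fun η' hη' L hL => ?_⟩
  obtain ⟨C, hC, hlog⟩ := QDS.exists_l1norm_transferIter_sub_le hlam hη hγ hT hL
  obtain ⟨B, hB, hpow⟩ :=
    QDS.exists_one_sub_log_rpow_mul_rpow_le (p := 1 + η) (by positivity) hη'
  refine ⟨C * B, by positivity, fun ρ z hρ hz n hn t ht hnt => ?_⟩
  have hn0 : (0 : ℝ) < n := by exact_mod_cast hn
  have hn1 : (n : ℝ)⁻¹ ≤ 1 := inv_le_one_of_one_le₀ (by exact_mod_cast hn)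
  have hinv : (n : ℝ) ^ (-η') = (n : ℝ)⁻¹ ^ η' := by
    rw [Real.rpow_neg hn0.le, Real.inv_rpow hn0.le]
  have hmain {s e : ℝ} (hs : s ∈ Icc 0 1) (hne : (n : ℝ)⁻¹ ≤ e) (hts : |t - s| ≤ e) (he1 : e ≤ 1)
      {r : Circle1 → ℝ} (hr : IsSRBDensity (γ s) r) :
      l1norm (arrTransfer Tarr n ⌊(n : ℝ) * t⌋₊ ρ - r) ≤ C * B * e ^ η' := by
    rw [QDS.arrTransfer_eq_transferIter, mul_assoc]
    exact (hlog hρ hz hn ht hs hnt hne hts he1 hr).trans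
      (mul_le_mul_of_nonneg_left (hpow e ⟨(inv_pos.2 hn0).trans_le hne, he1⟩) hC.le)
  have hts1 {s : ℝ} (hs : s ∈ Icc (0 : ℝ) 1) : |t - s| ≤ 1 :=
    abs_le.2 ⟨by linarith [ht.1, hs.2], by linarith [ht.2, hs.1]⟩
  rw [hinv]
  refine ⟨fun r hr => hmain ht le_rfl (by simp) hn1 hr, fun s hs r hr => ?_⟩
  refine (hmain hs (le_max_left _ _) (le_max_right _ _) (max_le hn1 (hts1 hs)) hr).trans ?_
  exact mul_le_mul_of_nonneg_left (QDS.max_rpow_le_add (by positivity) (abs_nonneg _) η')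
    (by positivity)

/-- Lemma `lem:combineddensities`.  There is `b > 0` such that for every
`η' < η` and every probability density `ρ` Lipschitz on `J_z` with constant `L`,
`‖ρ_{n,⌊nt⌋} − ρ̂_t‖_{L¹(𝔪)} ≤ C n^{−η'}` and, more generally,
`‖ρ_{n,⌊nt⌋} − ρ̂_s‖_{L¹(𝔪)} ≤ C(n^{−η'} + |t−s|^{η'})`, whenever `t ≥ b n⁻¹ log n`; the
constant `C` depends only on `η'` and `L`. -/
theorem statement8 {lam Astar : ℝ} (hlam : 1 < lam) (hA : 0 < Astar)
    {η : ℝ} (hη : η ∈ Set.Ioo (0 : ℝ) 1)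
    (γ : ℝ → CM lam Astar) (hγ : HolderCurve η γ)
    (Tarr : ℕ → ℕ → CM lam Astar) (hT : ArrayApprox η γ Tarr) :
    ∃ b : ℝ, 0 < b ∧
      ∀ η' : ℝ, η' < η → ∀ L : ℝ, 0 < L → ∃ C : ℝ, 0 < C ∧
        ∀ (ρ : Circle1 → ℝ) (z : Circle1), IsProbDensity ρ → LipOnArc z L ρ →
          ∀ n : ℕ, 1 ≤ n → ∀ t ∈ Set.Icc (0 : ℝ) 1, b * Real.log n / n ≤ t →
            (∀ ρhatt : Circle1 → ℝ, IsSRBDensity (γ t) ρhatt →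
              l1norm (fun x => arrTransfer Tarr n ⌊(n : ℝ) * t⌋₊ ρ x - ρhatt x) ≤
                C * (n : ℝ) ^ (-η')) ∧
            (∀ s ∈ Set.Icc (0 : ℝ) 1, ∀ ρhats : Circle1 → ℝ, IsSRBDensity (γ s) ρhats →
              l1norm (fun x => arrTransfer Tarr n ⌊(n : ℝ) * t⌋₊ ρ x - ρhats x) ≤
                C * ((n : ℝ) ^ (-η') + |t - s| ^ η')) :=
  let ⟨b, hb, h⟩ := statement8_general hlam hη.1 γ hγ Tarr hT
  ⟨b, hb, fun η' hη' L hL => h η' hη' L hL.le⟩
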